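/- arXiv:2512.12446 — 3 statements merged into one kernel-verified Lean document; each statement's English description precedes it below -/
import Mathlib

section
/- Let n ≥ 3 be a finite natural number and let 𝔄 = ⟨A, +, −, c_Γ, s_σ⟩_{Γ⊆Fin n, σ∈T_n} be a polyadic-type algebra of dimension n. Then 𝔄 is isomorphic to a subalgebra of a direct product of full polyadic set algebras (without diagonals) if and only if the reduct ⟨A, +, −, c_Γ⟩_{Γ⊆Fin n} is isomorphic to a subalgebra of a direct product of algebras ⟨𝒫(^nU), ∪, complement, C_Γ⟩_{Γ⊆Fin n} and the following equations hold in 𝔄 for all Γ ⊆ Fin n and all σ, τ ∈ T_n: (1) s_σ(x + y) = s_σ x + s_σ y and s_σ(−x) = −s_σ x; (2) s_{σ∘τ} x = s_σ(s_τ x) and s_{id} x = x; (3) s_σ c_Γ x = s_τ c_Γ x whenever σ(i) = τ(i) for all i ∉ Γ; (4) c_Γ s_σ x = s_σ c_{σ⁻¹Γ} x whenever σ is injective on σ⁻¹Γ, where σ⁻¹Γ = {i : σ(i) ∈ Γ}. -/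
/-- Cylindrification along a set of coordinates `Γ`:
`C_Γ(R) = {s : ∃ z ∈ R, s i = z i for all i ∉ Γ}`. -/
def cylG {n : ℕ} {U : Type} (Γ : Set (Fin n)) (R : Set (Fin n → U)) : Set (Fin n → U) :=
  {s | ∃ z ∈ R, ∀ i ∉ Γ, s i = z i}

/-- Substitution along a transformation `σ`: `S_σ(R) = {s : s ∘ σ ∈ R}`. -/
def subG {n : ℕ} {U : Type} (σ : Fin n → Fin n) (R : Set (Fin n → U)) : Set (Fin n → U) :=
  {s | s ∘ σ ∈ R}

/-- `𝔄 = ⟨A, +, −, c_Γ, s_σ⟩` is isomorphic to a subalgebra of a direct product of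
full polyadic set algebras (without diagonals). -/
def RepPoly {n : ℕ} {A : Type} [BooleanAlgebra A]
    (c : Set (Fin n) → A → A) (s : (Fin n → Fin n) → A → A) : Prop :=
  ∃ (ι : Type) (U : ι → Type) (f : A → ∀ k, Set (Fin n → U k)),
    Function.Injective f ∧
    (∀ x y : A, f (x ⊔ y) = f x ⊔ f y) ∧
    (∀ x : A, f xᶜ = (f x)ᶜ) ∧
    (∀ (Γ : Set (Fin n)) (x : A) (k : ι), f (c Γ x) k = cylG Γ (f x k)) ∧
    (∀ (σ : Fin n → Fin n) (x : A) (k : ι), f (s σ x) k = subG σ (f x k))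

/-- The reduct `⟨A, +, −, c_Γ⟩` is isomorphic to a subalgebra of a direct product
of algebras `⟨𝒫(ⁿU), ∪, ᶜ, C_Γ⟩`. -/
def RepDf {n : ℕ} {A : Type} [BooleanAlgebra A]
    (c : Set (Fin n) → A → A) : Prop :=
  ∃ (ι : Type) (U : ι → Type) (f : A → ∀ k, Set (Fin n → U k)),
    Function.Injective f ∧
    (∀ x y : A, f (x ⊔ y) = f x ⊔ f y) ∧
    (∀ x : A, f xᶜ = (f x)ᶜ) ∧
    (∀ (Γ : Set (Fin n)) (x : A) (k : ι), f (c Γ x) k = cylG Γ (f x k))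

/-!
Let `x ≠ ⊥` be nonempty in a representation of the cylindric reduct. Call points `y`, `z` twins at
the coordinates `k`, `l` if no tuple with these entries lies in an element that the replacement
`[k/l]` sends to `⊥`; this imitates the missing diagonal `y = z`. In an ultrapower every point has a
twin at every other coordinate, so it can be completed to a family of twins, one representative per
coordinate. A tuple of such families, read along the diagonal, is compatible with all substitutions
as long as only elements `c_i a` are tested.

The polyadic representation lives on many copies of these families. Each tuple is labelled with an
ultrafilter that extends the prescribed cylinders. On injective tuples the labels are free up to
permutation of the coordinates, and a generic colouring makes every admissible label occur at some
new point. On a tuple with repetitions the label is forced: it is pulled back along a non-injective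
`σ`, and `s_σ a = c_i (s_σ a)` for every `i` outside the range of `σ`.
-/

section Transformations

open Equiv Function

variable {ι : Type*} [DecidableEq ι]

lemma injective_update_of_injOn {α : Type*} {f : ι → α} {i : ι} {z : α} (hf : Set.InjOn f {i}ᶜ)
    (hz : ∀ j, f j ≠ z) : Injective (update f i z) := by
  intro j k hjk
  rcases eq_or_ne i j with rfl | hj <;> rcases eq_or_ne i k with rfl | hk
  · rfl
  · rw [update_self, update_of_ne hk.symm] at hjk
    exact absurd hjk.symm (hz k)
  · rw [update_of_ne hj.symm, update_self] at hjk
    exact absurd hjk (hz j)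
  · rw [update_of_ne hj.symm, update_of_ne hk.symm] at hjk
    exact hf hj.symm hk.symm hjk

lemma update_id_comp_update_id (k l : ι) :
    update id k l ∘ update id l k = update id k l := by
  grind

lemma update_id_comp_of_forall_ne {α : Type*} {f : α → ι} {m : ι} (hf : ∀ a, f a ≠ m) (l : ι) :
    update id m l ∘ f = f :=
  funext fun a => update_of_ne (hf a) _ _

lemma update_id_ne {k l : ι} (hkl : k ≠ l) (j : ι) : update id k l j ≠ k := by
  rcases eq_or_ne j k with rfl | hj
  · rw [update_self]
    exact hkl.symm
  · rwa [update_of_ne hj]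

lemma preimage_update_id {k l : ι} {Γ : Set ι} (hk : k ∉ Γ) (hl : l ∉ Γ) :
    update id k l ⁻¹' Γ = Γ := by
  ext j
  rcases eq_or_ne j k with rfl | hj <;> simp [*]

lemma injOn_update_id {k : ι} (l : ι) {Γ : Set ι} (hk : k ∉ Γ) : Set.InjOn (update id k l) Γ := by
  have hfix : ∀ j ∈ Γ, update id k l j = j := fun j hj =>
    update_of_ne (ne_of_mem_of_not_mem hj hk) _ _
  intro a ha b hb hab
  rwa [hfix a ha, hfix b hb] at hab

-- A non-injective `σ` factors as `[m/σ k] ∘ σ'`, where `m ∉ range σ` and `σ'` has the larger range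
-- `range σ ∪ {m}`.
theorem transformation_induction [Finite ι] {M : (ι → ι) → Prop} (id_mem : M id)
    (comp : ∀ σ τ, M σ → M τ → M (σ ∘ τ)) (replace : ∀ k l, k ≠ l → M (update id k l))
    (swap : ∀ k l, k ≠ l → M (swap k l)) (σ : ι → ι) : M σ := by
  induction hN : (Set.range σ)ᶜ.ncard using Nat.strong_induction_on generalizing σ with
  | _ N ih =>
  by_cases hσ : Injective σ
  · obtain ⟨ρ, rfl⟩ : ∃ ρ : Perm ι, ⇑ρ = σ :=
      ⟨.ofBijective σ (Finite.injective_iff_bijective.1 hσ), rfl⟩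
    exact Perm.swap_induction_on ρ id_mem fun f x y hxy hf =>
      comp (Equiv.swap x y) f (swap x y hxy) hf
  · obtain ⟨m, hm⟩ : ∃ m, ∀ j, σ j ≠ m := by
      simpa [Surjective] using mt Finite.injective_iff_surjective.2 hσ
    obtain ⟨j, k, hjk, hne⟩ : ∃ j k, σ j = σ k ∧ j ≠ k := by
      simpa [Injective] using hσ
    have hfactor : update id m (σ k) ∘ update σ k m = σ := by
      rw [comp_update, update_id_comp_of_forall_ne hm, update_self, update_eq_self]
    have hrange : (Set.range (update σ k m))ᶜ ⊂ (Set.range σ)ᶜ := by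
      refine compl_lt_compl_iff_lt.2 ⟨?_, fun h => ?_⟩
      · rintro _ ⟨i, rfl⟩
        rcases eq_or_ne i k with rfl | hik
        · exact ⟨j, by rw [update_of_ne hne, hjk]⟩
        · exact ⟨i, update_of_ne hik _ _⟩
      · obtain ⟨i, hi⟩ := h ⟨k, update_self k m σ⟩
        exact hm i hi
    rw [← hfactor]
    exact comp _ _ (replace m (σ k) (hm k).symm)
      (ih _ (hN ▸ Set.ncard_lt_ncard hrange (Set.toFinite _)) _ rfl)

-- Elements of the form `c {i} a` thus do not tell a transposition from a product of replacements.
lemma exists_eq_swap_off {M : (ι → ι) → Prop}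
    (comp : ∀ σ τ, M σ → M τ → M (σ ∘ τ)) (replace : ∀ k l, k ≠ l → M (update id k l)) {k l : ι}
    (hkl : k ≠ l) (i : ι) : ∃ σ, M σ ∧ ∀ j, j ≠ i → σ j = Equiv.swap k l j := by
  rcases eq_or_ne i k with rfl | hik
  · exact ⟨_, replace l i hkl.symm, fun j hj => by simp [Equiv.swap_apply_def, update_apply, hj]⟩
  rcases eq_or_ne i l with rfl | hil
  · exact ⟨_, replace k i hkl, fun j hj => by simp [Equiv.swap_apply_def, update_apply, hj]⟩
  · refine ⟨_, comp _ _ (replace i l hil) (comp _ _ (replace l k hkl.symm) (replace k i hik.symm)),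
      fun j hj => ?_⟩
    simp only [comp_apply, Equiv.swap_apply_def, update_apply, id]
    split_ifs <;> simp_all

/-- A transformation that identifies exactly the indices at which `u` takes equal values: it chooses
a representative of each fibre of `u`. -/
noncomputable def fiberRepr {α U : Type*} (u : α → U) : α → α :=
  Set.rangeSplitting u ∘ Set.rangeFactorization u

lemma comp_fiberRepr {α U : Type*} (u : α → U) : u ∘ fiberRepr u = u :=
  funext fun _ => Set.apply_rangeSplitting u _

lemma fiberRepr_eq_of_eq {α U : Type*} {u : α → U} {i j : α} (hij : u i = u j) :
    fiberRepr u i = fiberRepr u j :=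
  congrArg (Set.rangeSplitting u) (Subtype.ext hij)

end Transformations

section SetAlgebra

open Function

variable {n : ℕ} {U : Type} {Γ : Set (Fin n)}

lemma cylG_empty (X : Set (Fin n → U)) : cylG ∅ X = X :=
  Set.ext fun v => ⟨fun ⟨_, hz, hv⟩ => (funext fun i => hv i (Set.notMem_empty i)) ▸ hz,
    fun hv => ⟨v, hv, fun _ _ => rfl⟩⟩

lemma subset_cylG (Γ : Set (Fin n)) (X : Set (Fin n → U)) : X ⊆ cylG Γ X :=
  fun v hv => ⟨v, hv, fun _ _ => rfl⟩

lemma cylG_empty_right (Γ : Set (Fin n)) : cylG Γ (∅ : Set (Fin n → U)) = ∅ :=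
  Set.eq_empty_of_forall_notMem fun _ ⟨_, hz, _⟩ => hz

lemma cylG_union (Γ Δ : Set (Fin n)) (X : Set (Fin n → U)) :
    cylG (Γ ∪ Δ) X = cylG Γ (cylG Δ X) := by
  classical
  ext v
  constructor
  · rintro ⟨z, hz, hv⟩
    refine ⟨Γ.piecewise z v, ⟨z, hz, fun i hi => ?_⟩, fun i hi => ?_⟩
    · by_cases hiΓ : i ∈ Γ
      · exact Set.piecewise_eq_of_mem _ _ _ hiΓ
      · exact (Set.piecewise_eq_of_notMem _ _ _ hiΓ).trans (hv i (by simp [hi, hiΓ]))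
    · exact (Set.piecewise_eq_of_notMem _ _ _ hi).symm
  · rintro ⟨w, ⟨z, hz, hw⟩, hv⟩
    refine ⟨z, hz, fun i hi => ?_⟩
    rw [Set.mem_union, not_or] at hi
    rw [hv i hi.1, hw i hi.2]

lemma mem_cylG_congr {X : Set (Fin n → U)} {v w : Fin n → U} (hvw : ∀ i ∉ Γ, v i = w i) :
    v ∈ cylG Γ X ↔ w ∈ cylG Γ X :=
  exists_congr fun _ => and_congr_right fun _ => forall₂_congr fun i hi => by rw [hvw i hi]

lemma mem_cylG_singleton {i : Fin n} {X : Set (Fin n → U)} {v : Fin n → U} :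
    v ∈ cylG {i} X ↔ ∃ z, update v i z ∈ X := by
  constructor
  · rintro ⟨w, hw, hv⟩
    have hwv : w = update v i (w i) := eq_update_iff.2 ⟨rfl, fun j hj => (hv j hj).symm⟩
    exact ⟨w i, hwv ▸ hw⟩
  · rintro ⟨z, hz⟩
    exact ⟨_, hz, fun j hj => (update_of_ne hj _ _).symm⟩

lemma subG_cylG_congr {σ τ : Fin n → Fin n} (hστ : ∀ i ∉ Γ, σ i = τ i) (X : Set (Fin n → U)) :
    subG σ (cylG Γ X) = subG τ (cylG Γ X) :=
  Set.ext fun v => mem_cylG_congr fun i hi => congrArg v (hστ i hi)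

lemma cylG_subG {σ : Fin n → Fin n} (hσ : Set.InjOn σ (σ ⁻¹' Γ)) (X : Set (Fin n → U)) :
    cylG Γ (subG σ X) = subG σ (cylG (σ ⁻¹' Γ) X) := by
  classical
  ext v
  constructor
  · rintro ⟨z, hz, hv⟩
    exact ⟨z ∘ σ, hz, fun i hi => hv (σ i) hi⟩
  · rintro ⟨z, hz, hv⟩
    let w : Fin n → U := fun k => if hk : ∃ i, σ i = k ∧ k ∈ Γ then z hk.choose else v k
    have hwσ : w ∘ σ = z := by
      funext i
      by_cases hi : σ i ∈ Γ
      · have hk : ∃ j, σ j = σ i ∧ σ i ∈ Γ := ⟨i, rfl, hi⟩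
        have hj : hk.choose = i :=
          hσ (by rw [Set.mem_preimage, hk.choose_spec.1]; exact hi) hi hk.choose_spec.1
        simp only [w, comp_apply, dif_pos hk, hj]
      · simpa [w, hi] using hv i hi
    refine ⟨w, ?_, fun k hk => by simp [w, hk]⟩
    change w ∘ σ ∈ X
    rwa [hwσ]

end SetAlgebra

section BooleanHom

/-- A map of Boolean algebras that preserves joins and complements, as a bundled homomorphism. -/
def boundedLatticeHomOfSupCompl {A B : Type*} [BooleanAlgebra A] [BooleanAlgebra B] (f : A → B)
    (hsup : ∀ x y, f (x ⊔ y) = f x ⊔ f y) (hcompl : ∀ x, f xᶜ = (f x)ᶜ) :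
    BoundedLatticeHom A B :=
  have htop : f ⊤ = ⊤ := by rw [← sup_compl_eq_top (x := (⊥ : A)), hsup, hcompl, sup_compl_eq_top]
  { toFun := f
    map_sup' := hsup
    map_inf' := fun x y => by
      rw [← compl_inj_iff, ← hcompl, compl_inf, hsup, hcompl, hcompl, compl_inf]
    map_top' := htop
    map_bot' := by rw [← compl_top, hcompl, htop, compl_top] }

variable {A X : Type*} [BooleanAlgebra A]

/-- The type of a point `v` in a field of sets: the ultrafilter of the elements that hold at `v`,
encoded as a homomorphism to `Prop`. -/
def pointType (R : BoundedLatticeHom A (Set X)) (v : X) : BoundedLatticeHom A Prop :=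
  boundedLatticeHomOfSupCompl (fun a => v ∈ R a) (fun x y => by rw [map_sup]; rfl)
    (fun x => by rw [map_compl']; rfl)

/-- The field of sets in which each point has a prescribed type. -/
def homOfPointTypes (N : X → BoundedLatticeHom A Prop) : BoundedLatticeHom A (Set X) :=
  boundedLatticeHomOfSupCompl (fun a => {v | N v a}) (fun x y => by simp only [map_sup]; rfl)
    (fun x => by simp only [map_compl']; rfl)

end BooleanHom

section Polyadic

open Function

variable {ι A : Type*} [BooleanAlgebra A]

/-- The laws that cylindrifications along sets of coordinates obey in representable algebras, as far
as they are combined with the substitution equations. -/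
structure IsQuantifier (c : Set ι → A → A) : Prop where
  empty : ∀ x, c ∅ x = x
  le : ∀ Γ x, x ≤ c Γ x
  bot : ∀ Γ, c Γ ⊥ = ⊥
  union : ∀ Γ Δ x, c (Γ ∪ Δ) x = c Γ (c Δ x)

/-- Polyadic algebras without diagonals: quantifiers together with the equations (1)–(4), of which
(1) is encoded by bundling each substitution as a Boolean homomorphism. -/
structure IsPolyadic (c : Set ι → A → A) (s : (ι → ι) → BoundedLatticeHom A A) : Prop
    extends IsQuantifier c where
  s_comp : ∀ σ τ x, s (σ ∘ τ) x = s σ (s τ x)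
  s_id : ∀ x, s id x = x
  s_c_congr : ∀ σ τ Γ x, (∀ i ∉ Γ, σ i = τ i) → s σ (c Γ x) = s τ (c Γ x)
  c_s : ∀ σ Γ x, Set.InjOn σ (σ ⁻¹' Γ) → c Γ (s σ x) = s σ (c (σ ⁻¹' Γ) x)

namespace IsPolyadic

variable {c : Set ι → A → A} {s : (ι → ι) → BoundedLatticeHom A A}

lemma comp_s (h : IsPolyadic c s) {B : Type*} [Lattice B] [BoundedOrder B]
    (F : BoundedLatticeHom A B) (σ τ : ι → ι) :
    F.comp (s (σ ∘ τ)) = (F.comp (s σ)).comp (s τ) :=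
  BoundedLatticeHom.ext fun a => congrArg F (h.s_comp σ τ a)

lemma comp_s_id (h : IsPolyadic c s) {B : Type*} [Lattice B] [BoundedOrder B]
    (F : BoundedLatticeHom A B) : F.comp (s id) = F :=
  BoundedLatticeHom.ext fun a => congrArg F (h.s_id a)

lemma c_singleton_s_of_notMem_range (h : IsPolyadic c s) {σ : ι → ι} {i : ι}
    (hi : ∀ j, σ j ≠ i) (x : A) : c {i} (s σ x) = s σ x := by
  have hpre : σ ⁻¹' {i} = ∅ := Set.eq_empty_of_forall_notMem hi
  rw [h.c_s σ {i} x (by simp [hpre]), hpre, h.empty]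

variable [DecidableEq ι]

lemma c_singleton_s_update_id (h : IsPolyadic c s) {k l : ι} (hkl : k ≠ l) (x : A) :
    c {k} (s (update id k l) x) = s (update id k l) x :=
  h.c_singleton_s_of_notMem_range (update_id_ne hkl) x

lemma s_update_id_le (h : IsPolyadic c s) (k l : ι) (x : A) :
    s (update id k l) x ≤ c {k} x :=
  calc s (update id k l) x ≤ s (update id k l) (c {k} x) := OrderHomClass.mono _ (h.le {k} x)
    _ = s id (c {k} x) := h.s_c_congr _ _ _ _ fun _ hj => update_of_ne hj _ _
    _ = c {k} x := h.s_id _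

lemma c_s_update_id (h : IsPolyadic c s) {k l : ι} {Γ : Set ι} (hk : k ∉ Γ) (hl : l ∉ Γ)
    (x : A) : c Γ (s (update id k l) x) = s (update id k l) (c Γ x) := by
  have hpre := preimage_update_id hk hl
  rw [h.c_s _ Γ x (by rw [hpre]; exact injOn_update_id l hk), hpre]

lemma s_update_id_c_eq_bot (h : IsPolyadic c s) {k l : ι} {Γ : Set ι} (hk : k ∉ Γ) (hl : l ∉ Γ)
    {x : A} (hx : s (update id k l) x = ⊥) : s (update id k l) (c Γ x) = ⊥ := by
  rw [← h.c_s_update_id hk hl, hx, h.bot]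

end IsPolyadic

end Polyadic

section CylHom

open Function

variable {n : ℕ} {A : Type*} [BooleanAlgebra A] {V : Type}

/-- `R` represents the cylindrifications `c` as those of a full set algebra. -/
def IsCylHom (c : Set (Fin n) → A → A) (R : BoundedLatticeHom A (Set (Fin n → V))) : Prop :=
  ∀ Γ a, R (c Γ a) = cylG Γ (R a)

variable {c : Set (Fin n) → A → A} {R : BoundedLatticeHom A (Set (Fin n → V))}

lemma IsCylHom.mem_congr (hR : IsCylHom c R) {Γ : Set (Fin n)} {v w : Fin n → V}
    (hvw : ∀ i ∉ Γ, v i = w i) (a : A) : v ∈ R (c Γ a) ↔ w ∈ R (c Γ a) := by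
  rw [hR, mem_cylG_congr hvw]

lemma IsQuantifier.isCylHom_of_singleton (hc : IsQuantifier c)
    (hR : ∀ i a, R (c {i} a) = cylG {i} (R a)) : IsCylHom c R := by
  intro Γ
  induction Γ, Γ.toFinite using Set.Finite.induction_on with
  | empty => intro a; rw [hc.empty, cylG_empty]
  | @insert i Γ _ _ ih =>
    intro a
    rw [Set.insert_eq, hc.union, hR, ih, cylG_union]

/-- The coordinatewise ultrapower of a representation. -/
def ultrapowerHom {I : Type} (𝒰 : Ultrafilter I) (R : BoundedLatticeHom A (Set (Fin n → V))) :
    BoundedLatticeHom A (Set (Fin n → I → V)) :=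
  boundedLatticeHomOfSupCompl (fun a => {v | ∀ᶠ B in 𝒰, (fun i => v i B) ∈ R a})
    (fun x y => by
      ext v
      simp only [map_sup]
      exact Ultrafilter.eventually_or)
    (fun x => by
      ext v
      simp only [map_compl']
      exact Ultrafilter.eventually_not)

lemma IsCylHom.ultrapowerHom (hR : IsCylHom c R) {I : Type} (𝒰 : Ultrafilter I) :
    IsCylHom c (ultrapowerHom 𝒰 R) := by
  classical
  intro Γ a
  ext v
  constructor
  · intro hv
    have hwitness (B : I) : ∃ z : Fin n → V, (∀ i ∉ Γ, v i B = z i) ∧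
        ((fun i => v i B) ∈ R (c Γ a) → z ∈ R a) := by
      by_cases hB : (fun i => v i B) ∈ R (c Γ a)
      · obtain ⟨z, hz, hvz⟩ := hR Γ a ▸ hB
        exact ⟨z, hvz, fun _ => hz⟩
      · exact ⟨_, fun _ _ => rfl, fun hB' => absurd hB' hB⟩
    choose z hvz hz using hwitness
    exact ⟨fun i B => z B i, hv.mono hz, fun i hi => funext fun B => hvz B i hi⟩
  · rintro ⟨z, hz, hvz⟩
    refine hz.mono fun B hB => ?_
    rw [hR]
    exact ⟨_, hB, fun i hi => congrFun (hvz i hi) B⟩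

end CylHom

section Twins

open Function
open Filter (atTop Eventually eventually_ge_atTop)

variable {n : ℕ} {A : Type*} [BooleanAlgebra A] {V : Type} {c : Set (Fin n) → A → A}
  {s : (Fin n → Fin n) → BoundedLatticeHom A A} {R : BoundedLatticeHom A (Set (Fin n → V))}

/-- `y` and `z` are indistinguishable at the coordinates `k` and `l`: a tuple with `y` at `k` and
`z` at `l` lies in no element that the replacement `[k/l]` sends to `⊥`. This is what remains,
without diagonals, of the equation `y = z`. -/
def Twin (s : (Fin n → Fin n) → BoundedLatticeHom A A) (R : BoundedLatticeHom A (Set (Fin n → V)))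
    (k l : Fin n) (y z : V) : Prop :=
  ∀ e, s (update id k l) e = ⊥ → ∀ v, v k = y → v l = z → v ∉ R e

namespace Twin

lemma mem_iff (h : IsPolyadic c s) {k l : Fin n} {v : Fin n → V}
    (hv : Twin s R k l (v k) (v l)) (hkl : k ≠ l) (a : A) :
    v ∈ R (s (update id k l) a) ↔ v ∈ R a := by
  have hidem : s (update id k l) (s (update id k l) a) = s (update id k l) a := by
    rw [← h.s_comp, update_id_comp_of_forall_ne (update_id_ne hkl)]
  have hkilled : s (update id k l) (symmDiff (s (update id k l) a) a) = ⊥ := by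
    rw [map_symmDiff', hidem, symmDiff_self]
  have hnot := hv _ hkilled v rfl rfl
  rw [map_symmDiff', Set.mem_symmDiff] at hnot
  tauto

lemma symm (h : IsPolyadic c s) {k l : Fin n} {y z : V} (hyz : Twin s R k l y z) :
    Twin s R l k z y := by
  intro e he v hz hy
  refine hyz e ?_ v hy hz
  rw [← update_id_comp_update_id k l, h.s_comp, he, map_bot]

lemma trans (h : IsPolyadic c s) (hR : IsCylHom c R) {k l m : Fin n} {x y z : V}
    (hxy : Twin s R k l x y) (hyz : Twin s R l m y z) (hkl : k ≠ l) (hlm : l ≠ m) :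
    Twin s R k m x z := by
  rintro e he v rfl rfl hv
  let w := update v l y
  have hw : w ∈ R (c {l} e) :=
    (hR.mem_congr (fun i hi => (update_of_ne hi y v).symm) e).1
      (OrderHomClass.mono R (h.le {l} e) hv)
  have hwk : w k = v k := update_of_ne hkl _ _
  have hwl : w l = y := update_self _ _ _
  have hwm : w m = v m := update_of_ne hlm.symm _ _
  rw [← hwk, ← hwl] at hxy
  rw [← hwl, ← hwm] at hyz
  have hcomp : update id l m ∘ update id k l =
      (update id l m ∘ update id k l) ∘ update id k m := by
    grind
  have hbot : s (update id l m) (s (update id k l) (c {l} e)) = ⊥ := by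
    rw [← h.s_comp, hcomp, h.s_comp, h.s_update_id_c_eq_bot (Γ := {l}) hkl hlm.symm he, map_bot]
  rw [← hxy.mem_iff h hkl, ← hyz.mem_iff h hlm, hbot, map_bot] at hw
  exact hw

end Twin

lemma exists_forall_notMem_of_s_update_id_eq_bot (h : IsPolyadic c s) (hR : IsCylHom c R)
    {k l : Fin n} (hkl : k ≠ l) {e : A} (he : s (update id k l) e = ⊥) (z : V) :
    ∃ y, ∀ v, v k = y → v l = z → v ∉ R e := by
  let d := c {k, l}ᶜ e
  have hd : s (update id k l) dᶜ = ⊤ := by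
    rw [map_compl', h.s_update_id_c_eq_bot (by simp) (by simp) he, compl_bot]
  have hc : c {k} dᶜ = ⊤ := top_le_iff.1 (hd ▸ h.s_update_id_le k l dᶜ)
  have hz : (fun _ => z) ∈ cylG {k} (R dᶜ) := by
    rw [← hR, hc, map_top]
    trivial
  obtain ⟨y, hy⟩ := mem_cylG_singleton.1 hz
  refine ⟨y, fun v hvk hvl hv => ?_⟩
  rw [map_compl'] at hy
  refine hy ((hR.mem_congr (fun i hi => ?_) e).1 (OrderHomClass.mono R (h.le {k, l}ᶜ e) hv))
  rcases not_not.1 hi with rfl | rfl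
  · rw [hvk, update_self]
  · rw [hvl, update_of_ne hkl.symm]

lemma exists_forall_notMem_of_mem_finset (h : IsPolyadic c s) (hR : IsCylHom c R)
    {k l : Fin n} (hkl : k ≠ l) (B : Finset A) (z : V) :
    ∃ y, ∀ e ∈ B, s (update id k l) e = ⊥ → ∀ v, v k = y → v l = z → v ∉ R e := by
  classical
  let K := B.filter fun e => s (update id k l) e = ⊥
  have hK : s (update id k l) (K.sup id) = ⊥ := by
    rw [map_finset_sup, Finset.sup_eq_bot_iff]
    exact fun e he => (Finset.mem_filter.1 he).2
  obtain ⟨y, hy⟩ := exists_forall_notMem_of_s_update_id_eq_bot h hR hkl hK z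
  refine ⟨y, fun e heB he v hvk hvl hv => hy v hvk hvl ?_⟩
  have heK : e ≤ K.sup id := Finset.le_sup (f := id) (Finset.mem_filter.2 ⟨heB, he⟩)
  exact OrderHomClass.mono R heK hv

theorem exists_isCylHom_forall_exists_twin {A V : Type} [BooleanAlgebra A]
    {c : Set (Fin n) → A → A} {s : (Fin n → Fin n) → BoundedLatticeHom A A}
    {R : BoundedLatticeHom A (Set (Fin n → V))} (h : IsPolyadic c s) (hR : IsCylHom c R) {x : A}
    (hx : (R x).Nonempty) :
    ∃ (W : Type) (R' : BoundedLatticeHom A (Set (Fin n → W))), IsCylHom c R' ∧ (R' x).Nonempty ∧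
      ∀ k l, k ≠ l → ∀ z, ∃ y, Twin s R' k l y z := by
  classical
  let 𝒰 := Ultrafilter.of (atTop : Filter (Finset A))
  refine ⟨Finset A → V, ultrapowerHom 𝒰 R, hR.ultrapowerHom 𝒰, ?_, fun k l hkl z => ?_⟩
  · obtain ⟨v, hv⟩ := hx
    exact ⟨fun i _ => v i, Filter.Eventually.of_forall fun _ => hv⟩
  · choose y hy using fun B => exists_forall_notMem_of_mem_finset h hR hkl B (z B)
    refine ⟨y, fun e he v hvk hvl hv => ?_⟩
    have hmem : ∀ᶠ B in (𝒰 : Filter (Finset A)), e ∈ B :=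
      Ultrafilter.of_le _ ((eventually_ge_atTop {e}).mono fun B hB =>
        Finset.singleton_subset_iff.1 hB)
    obtain ⟨B, hvB, heB⟩ := (Eventually.and hv hmem).exists
    exact hy B e heB he _ (congrFun hvk B) (congrFun hvl B) hvB

end Twins

section LabelSystems

open Function

variable {ι A P : Type*} [DecidableEq ι] [BooleanAlgebra A] {c : Set ι → A → A}
  {s : (ι → ι) → BoundedLatticeHom A A} {L : (ι → P) → Set (BoundedLatticeHom A Prop)}

/-- A system of admissible labels: `L p` is the set of the types that a tuple over the tuple `p`
of `P` may be given in a representation. By `cyl`, admissible types of tuples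
over `p` may differ only on elements that depend on every coordinate. -/
structure IsLabelSystem (c : Set ι → A → A) (s : (ι → ι) → BoundedLatticeHom A A)
    (L : (ι → P) → Set (BoundedLatticeHom A Prop)) : Prop where
  nonempty : ∀ p, (L p).Nonempty
  comp_mem : ∀ σ p, ∀ F ∈ L p, F.comp (s σ) ∈ L (p ∘ σ)
  cyl : ∀ i p q, (∀ j, j ≠ i → p j = q j) → ∀ F ∈ L p, ∀ G ∈ L q, ∀ a, F (c {i} a) ↔ G (c {i} a)
  witness : ∀ i p, ∀ F ∈ L p, ∀ a, F (c {i} a) → ∃ q, ∃ G ∈ L (update p i q), G a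

lemma IsLabelSystem.comp_eq_of_not_injective [Finite ι] (hL : IsLabelSystem c s L)
    (h : IsPolyadic c s) {p : ι → P} {F G : BoundedLatticeHom A Prop} (hF : F ∈ L p) (hG : G ∈ L p)
    {σ : ι → ι} (hσ : ¬ Injective σ) : F.comp (s σ) = G.comp (s σ) := by
  obtain ⟨i, hi⟩ : ∃ i, ∀ j, σ j ≠ i := by
    simpa [Surjective] using mt Finite.injective_iff_surjective.2 hσ
  ext a
  change F (s σ a) ↔ G (s σ a)
  rw [← h.c_singleton_s_of_notMem_range hi]
  exact hL.cyl i p p (fun _ _ => rfl) F hF G hG _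

end LabelSystems

section TwinFamilies

open Function

variable {n : ℕ} {A : Type*} [BooleanAlgebra A] {V : Type} {c : Set (Fin n) → A → A}
  {s : (Fin n → Fin n) → BoundedLatticeHom A A} {R : BoundedLatticeHom A (Set (Fin n → V))}

/-- A point described coordinate by coordinate: representatives in `V`, one for each coordinate,
that are pairwise twins. -/
structure TwinFamily (s : (Fin n → Fin n) → BoundedLatticeHom A A)
    (R : BoundedLatticeHom A (Set (Fin n → V))) where
  rep : Fin n → V
  twin : ∀ k l, k ≠ l → Twin s R k l (rep k) (rep l)

lemma exists_twinFamily_rep_eq (h : IsPolyadic c s) (hR : IsCylHom c R)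
    (htwin : ∀ k l, k ≠ l → ∀ z, ∃ y, Twin s R k l y z) (k : Fin n) (z : V) :
    ∃ q : TwinFamily s R, q.rep k = z := by
  choose y hy using fun i hi => htwin i k hi z
  let r : Fin n → V := fun i => if hi : i = k then z else y i hi
  have hrk : r k = z := dif_pos rfl
  have hr : ∀ i, i ≠ k → Twin s R i k (r i) z := fun i hi => by
    simpa only [r, dif_neg hi] using hy i hi
  refine ⟨⟨r, fun i j hij => ?_⟩, hrk⟩
  rcases eq_or_ne i k with rfl | hi
  · rw [hrk]
    exact (hr j hij.symm).symm h
  rcases eq_or_ne j k with rfl | hj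
  · rw [hrk]
    exact hr i hi
  · exact (hr i hi).trans h hR ((hr j hj).symm h) hi hj.symm

/-- The tuple of `V` that represents a tuple of twin families. -/
def diagTuple (p : Fin n → TwinFamily s R) : Fin n → V :=
  fun j => (p j).rep j

/-- The types that agree with the type of `diagTuple p` on every cylinder. -/
def twinLabels (c : Set (Fin n) → A → A) (p : Fin n → TwinFamily s R) :
    Set (BoundedLatticeHom A Prop) :=
  {F | ∀ i a, F (c {i} a) ↔ diagTuple p ∈ R (c {i} a)}

lemma pointType_diagTuple_mem_twinLabels (p : Fin n → TwinFamily s R) :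
    pointType R (diagTuple p) ∈ twinLabels c p :=
  fun _ _ => Iff.rfl

lemma diagTuple_mem_congr (hR : IsCylHom c R) {i : Fin n} {p q : Fin n → TwinFamily s R}
    (hpq : ∀ j, j ≠ i → p j = q j) (a : A) :
    diagTuple p ∈ R (c {i} a) ↔ diagTuple q ∈ R (c {i} a) :=
  hR.mem_congr (fun j hj => congrArg (fun t => t.rep j) (hpq j hj)) a

lemma comp_s_update_id_mem_twinLabels (h : IsPolyadic c s) (hR : IsCylHom c R) {k l : Fin n}
    (hkl : k ≠ l) {p : Fin n → TwinFamily s R} {F : BoundedLatticeHom A Prop}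
    (hF : F ∈ twinLabels c p) :
    F.comp (s (update id k l)) ∈ twinLabels c (p ∘ update id k l) := by
  intro i a
  let q := p ∘ update id k l
  have hpq : ∀ j, j ≠ k → p j = q j := fun j hj => by
    simp only [q, comp_apply, update_of_ne hj, id]
  have hql : q k = q l := by
    simp only [q, comp_apply, update_self, update_of_ne hkl.symm, id]
  have htwin : Twin s R k l (diagTuple q k) (diagTuple q l) := by
    unfold diagTuple
    rw [hql]
    exact (q l).twin k l hkl
  calc F (s (update id k l) (c {i} a))
      ↔ F (c {k} (s (update id k l) (c {i} a))) := by rw [h.c_singleton_s_update_id hkl]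
    _ ↔ diagTuple p ∈ R (c {k} (s (update id k l) (c {i} a))) := hF _ _
    _ ↔ diagTuple q ∈ R (c {k} (s (update id k l) (c {i} a))) := diagTuple_mem_congr hR hpq _
    _ ↔ diagTuple q ∈ R (s (update id k l) (c {i} a)) := by rw [h.c_singleton_s_update_id hkl]
    _ ↔ diagTuple q ∈ R (c {i} a) := htwin.mem_iff h hkl _

lemma comp_s_mem_twinLabels (h : IsPolyadic c s) (hR : IsCylHom c R) (σ : Fin n → Fin n) :
    ∀ p : Fin n → TwinFamily s R, ∀ F ∈ twinLabels c p, F.comp (s σ) ∈ twinLabels c (p ∘ σ) := by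
  let M : (Fin n → Fin n) → Prop := fun σ =>
    ∀ p : Fin n → TwinFamily s R, ∀ F ∈ twinLabels c p, F.comp (s σ) ∈ twinLabels c (p ∘ σ)
  have hcomp : ∀ σ τ, M σ → M τ → M (σ ∘ τ) := fun σ τ hσ hτ p F hF => by
    rw [h.comp_s]
    exact hτ _ _ (hσ p F hF)
  have hreplace : ∀ k l, k ≠ l → M (update id k l) := fun k l hkl p F hF =>
    comp_s_update_id_mem_twinLabels h hR hkl hF
  refine transformation_induction (M := M) (fun p F hF => ?_) hcomp hreplace
    (fun k l hkl p F hF i a => ?_) σ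
  · rw [h.comp_s_id]
    exact hF
  · obtain ⟨τ, hτ, hswap⟩ := exists_eq_swap_off hcomp hreplace hkl i
    calc F (s (Equiv.swap k l) (c {i} a))
        ↔ F (s τ (c {i} a)) := by rw [h.s_c_congr _ τ {i} a fun j hj => (hswap j hj).symm]
      _ ↔ diagTuple (p ∘ τ) ∈ R (c {i} a) := hτ p F hF i a
      _ ↔ diagTuple (p ∘ Equiv.swap k l) ∈ R (c {i} a) :=
        diagTuple_mem_congr hR (fun j hj => congrArg p (hswap j hj)) a

theorem isLabelSystem_twinLabels (h : IsPolyadic c s) (hR : IsCylHom c R)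
    (htwin : ∀ k l, k ≠ l → ∀ z, ∃ y, Twin s R k l y z) :
    IsLabelSystem c s (twinLabels (s := s) (R := R) c) where
  nonempty p := ⟨_, pointType_diagTuple_mem_twinLabels p⟩
  comp_mem := comp_s_mem_twinLabels h hR
  cyl i p q hpq F hF G hG a := by
    rw [hF, hG]
    exact diagTuple_mem_congr hR hpq a
  witness i p F hF a ha := by
    rw [hF, hR, mem_cylG_singleton] at ha
    obtain ⟨z, hz⟩ := ha
    obtain ⟨q, hq⟩ := exists_twinFamily_rep_eq h hR htwin i z
    have hdiag : diagTuple (update p i q) = update (diagTuple p) i z := by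
      funext j
      rcases eq_or_ne j i with rfl | hj
      · simp only [diagTuple, update_self, hq]
      · simp only [diagTuple, update_of_ne hj]
    exact ⟨q, _, pointType_diagTuple_mem_twinLabels _, hdiag ▸ hz⟩

lemma apply_c_univ_of_mem_twinLabels [Nonempty (Fin n)] (h : IsQuantifier c)
    (hR : IsCylHom c R) {x : A} (hx : (R x).Nonempty) {p : Fin n → TwinFamily s R}
    {F : BoundedLatticeHom A Prop} (hF : F ∈ twinLabels c p) : F (c Set.univ x) := by
  let i : Fin n := Classical.arbitrary _
  obtain ⟨v, hv⟩ := hx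
  have hc : c {i} (c Set.univ x) = c Set.univ x := by rw [← h.union, Set.union_univ]
  rw [← hc, hF, hc, hR]
  exact ⟨v, hv, fun j hj => absurd (Set.mem_univ j) hj⟩

end TwinFamilies

section Sorting

open Function

variable {n : ℕ} {U : Type*} [LinearOrder U]

lemma sort_eq_sort_of_le_iff_le {u v : Fin n → U} (huv : ∀ i j, u i ≤ u j ↔ v i ≤ v j) :
    Tuple.sort u = Tuple.sort v := by
  obtain ⟨hmono, hties⟩ := Tuple.eq_sort_iff.1 (rfl : Tuple.sort u = Tuple.sort u)
  exact Tuple.eq_sort_iff.2 ⟨fun i j hij => (huv _ _).1 (hmono hij), fun i j hij heq =>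
    hties i j hij (le_antisymm ((huv _ _).2 heq.le) ((huv _ _).2 heq.ge))⟩

lemma sort_update_eq_sort_update_of_forall_lt {u : Fin n → U} (i : Fin n) {y z : U}
    (hy : ∀ j, u j < y) (hz : ∀ j, u j < z) :
    Tuple.sort (update u i y) = Tuple.sort (update u i z) := by
  refine sort_eq_sort_of_le_iff_le fun j k => ?_
  rcases eq_or_ne i j with rfl | hj <;> rcases eq_or_ne i k with rfl | hk
  · simp
  · simp [hk.symm, (hy k).not_ge, (hz k).not_ge]
  · simp [hj.symm, (hy j).le, (hz j).le]
  · simp [hj.symm, hk.symm]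

lemma sort_comp_perm {u : Fin n → U} (hu : Injective u) (τ : Equiv.Perm (Fin n)) :
    Tuple.sort (u ∘ τ) = τ⁻¹ * Tuple.sort u := by
  refine Equiv.ext fun i => τ.injective (hu ?_)
  simpa using congrFun (Tuple.comp_perm_comp_sort_eq_comp_sort (f := u) (σ := τ)) i

end Sorting

section Labelling

open Function

universe u v

/-- The colour of a tuple is the sum of the weights of its entries, so that the weight of one new
entry can give it any prescribed value. -/
theorem exists_generic_coloring (ι : Type*) [Finite ι] [DecidableEq ι] (C : Type u) (P : Type v)
    [Nonempty C] :
    ∃ (U : Type (max u v)) (_ : LinearOrder U) (π : U → P) (χ : (ι → U) → C), Surjective π ∧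
      (∀ x (τ : Equiv.Perm ι), χ (x ∘ τ) = χ x) ∧
      ∀ x i q b, ∃ z, (∀ j, x j < z) ∧ π z = q ∧ χ (update x i z) = b := by
  classical
  cases nonempty_fintype ι
  obtain ⟨_⟩ := nonempty_commRing C
  let U := ℕ ×ₗ (C × P)
  let _ : LinearOrder (C × P) := linearOrderOfSTO WellOrderingRel
  let weight : U → C := fun z => (ofLex z).2.1
  let χ : (ι → U) → C := fun x => ∑ j, weight (x j)
  refine ⟨U, inferInstance, fun z => (ofLex z).2.2, χ, fun q => ⟨toLex (0, 0, q), rfl⟩,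
    fun x τ => Equiv.sum_comp τ fun j => weight (x j), fun x i q b => ?_⟩
  obtain ⟨m, hm⟩ := (Set.finite_range fun j => (ofLex (x j)).1).bddAbove
  refine ⟨toLex (m + 1, b - ∑ j ∈ Finset.univ \ {i}, weight (x j), q), fun j => ?_, rfl, ?_⟩
  · exact Prod.Lex.lt_iff.2 (.inl (Nat.lt_succ_of_le (hm ⟨j, rfl⟩)))
  · have hweight (z : U) :
        (fun j => weight (update x i z j)) = update (fun j => weight (x j)) i (weight z) :=
      comp_update weight x i z
    simp only [χ, hweight, Finset.sum_update_of_mem (Finset.mem_univ i)]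
    exact sub_add_cancel b _

variable {n : ℕ} {A : Type u} {P : Type v} [BooleanAlgebra A] {c : Set (Fin n) → A → A}
  {s : (Fin n → Fin n) → BoundedLatticeHom A A}
  {L : (Fin n → P) → Set (BoundedLatticeHom A Prop)}

/-- A labelling `N` of all tuples of `U` by admissible types that behaves like the types of the
points of a polyadic set algebra as far as injective tuples are concerned. -/
structure IsInjectiveLabelling {U : Type*} (s : (Fin n → Fin n) → BoundedLatticeHom A A)
    (L : (Fin n → P) → Set (BoundedLatticeHom A Prop)) (π : U → P)
    (N : (Fin n → U) → BoundedLatticeHom A Prop) : Prop where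
  surjective : Surjective π
  mem : ∀ x, N x ∈ L (π ∘ x)
  comp_perm : ∀ x, Injective x → ∀ τ : Equiv.Perm (Fin n), N (x ∘ τ) = (N x).comp (s τ)
  extend : ∀ x i q, ∀ F ∈ L (update (π ∘ x) i q),
    ∃ z, (∀ j, x j ≠ z) ∧ π z = q ∧ N (update x i z) = F

theorem exists_isInjectiveLabelling (h : IsPolyadic c s) (hL : IsLabelSystem c s L) :
    ∃ (U : Type (max u v)) (π : U → P) (N : (Fin n → U) → BoundedLatticeHom A Prop),
      IsInjectiveLabelling s L π N := by
  classical
  have (r : Fin n → P) : Nonempty (L r) := (hL.nonempty r).to_subtype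
  obtain ⟨U, _, π, χ, hπ, hχ, hext⟩ := exists_generic_coloring (Fin n) (∀ r, L r) P
  -- The colour of a tuple chooses the label of its increasing rearrangement.
  let N : (Fin n → U) → BoundedLatticeHom A Prop := fun x =>
    (χ x (π ∘ x ∘ Tuple.sort x)).1.comp (s ⇑(Tuple.sort x)⁻¹)
  have hcancel (ρ : Equiv.Perm (Fin n)) : ⇑ρ ∘ ⇑ρ⁻¹ = id := funext ρ.apply_symm_apply
  refine ⟨U, π, N, hπ, fun x => ?_, fun x hx τ => ?_, fun x i q F hF => ?_⟩
  · have hmem := hL.comp_mem ⇑(Tuple.sort x)⁻¹ _ _ (χ x (π ∘ x ∘ Tuple.sort x)).2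
    rwa [comp_assoc, comp_assoc, hcancel, comp_id] at hmem
  · have hinv : ⇑(Tuple.sort (x ∘ τ))⁻¹ = ⇑(Tuple.sort x)⁻¹ ∘ τ := by
      rw [sort_comp_perm hx, mul_inv_rev, inv_inv, Equiv.Perm.coe_mul]
    have hsorted : x ∘ τ ∘ Tuple.sort (x ∘ τ) = x ∘ Tuple.sort x :=
      Tuple.comp_perm_comp_sort_eq_comp_sort
    simp only [N]
    rw [hχ, comp_assoc, hsorted, hinv, h.comp_s]
  · obtain ⟨y, hy, -, -⟩ := hext x i q (Classical.arbitrary _)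
    let ρ := Tuple.sort (update x i y)
    let b : ∀ r, L r := update (Classical.arbitrary _) (update (π ∘ x) i q ∘ ρ)
      ⟨F.comp (s ρ), hL.comp_mem ρ _ F hF⟩
    obtain ⟨z, hz, hπz, hχz⟩ := hext x i q b
    refine ⟨z, fun j => (hz j).ne, hπz, ?_⟩
    have hρ : Tuple.sort (update x i z) = ρ := sort_update_eq_sort_update_of_forall_lt i hz hy
    have hr : π ∘ update x i z ∘ ρ = update (π ∘ x) i q ∘ ρ := by
      rw [← comp_assoc, comp_update, hπz]
    simp only [N]
    rw [hχz, hρ, hr, show b _ = _ from update_self _ _ _, ← h.comp_s, hcancel, h.comp_s_id]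

/-- A labelling `N` of all tuples of `U` by admissible types that behaves like the types of the
points of a polyadic set algebra. -/
structure IsLabelling {U : Type*} (c : Set (Fin n) → A → A)
    (s : (Fin n → Fin n) → BoundedLatticeHom A A)
    (L : (Fin n → P) → Set (BoundedLatticeHom A Prop)) (π : U → P)
    (N : (Fin n → U) → BoundedLatticeHom A Prop) : Prop where
  surjective : Surjective π
  mem : ∀ x, N x ∈ L (π ∘ x)
  comp : ∀ x σ, N (x ∘ σ) = (N x).comp (s σ)
  witness : ∀ x i a, N x (c {i} a) → ∃ z, N (update x i z) a

/-- The extension of a labelling of the injective tuples to all tuples: the label of `x` is pulled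
back along a transformation that identifies exactly the coordinates that `x` identifies. -/
noncomputable def extendLabelling {U : Type*} (s : (Fin n → Fin n) → BoundedLatticeHom A A)
    (N : (Fin n → U) → BoundedLatticeHom A Prop) (x : Fin n → U) : BoundedLatticeHom A Prop :=
  (N x).comp (s (fiberRepr x))

lemma extendLabelling_of_injective {U : Type*} {N : (Fin n → U) → BoundedLatticeHom A Prop}
    (h : IsPolyadic c s) {x : Fin n → U} (hx : Injective x) :
    extendLabelling s N x = N x := by
  have hid : fiberRepr x = id := hx.comp_left (comp_fiberRepr x)
  rw [extendLabelling, hid, h.comp_s_id]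

namespace IsInjectiveLabelling

variable {U : Type*} {π : U → P} {N : (Fin n → U) → BoundedLatticeHom A Prop}

lemma extendLabelling_mem (hN : IsInjectiveLabelling s L π N) (hL : IsLabelSystem c s L)
    (x : Fin n → U) : extendLabelling s N x ∈ L (π ∘ x) := by
  have hmem := hL.comp_mem (fiberRepr x) _ _ (hN.mem x)
  rwa [comp_assoc, comp_fiberRepr] at hmem

lemma extendLabelling_comp (hN : IsInjectiveLabelling s L π N) (h : IsPolyadic c s)
    (hL : IsLabelSystem c s L) (x : Fin n → U) (σ : Fin n → Fin n) :
    extendLabelling s N (x ∘ σ) = (extendLabelling s N x).comp (s σ) := by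
  by_cases hxσ : Injective (x ∘ σ)
  · obtain ⟨τ, rfl⟩ : ∃ τ : Equiv.Perm (Fin n), ⇑τ = σ :=
      ⟨.ofBijective σ (Finite.injective_iff_bijective.1 hxσ.of_comp), rfl⟩
    have hx : Injective x := τ.injective_comp x |>.1 hxσ
    rw [extendLabelling_of_injective h hxσ, extendLabelling_of_injective h hx, hN.comp_perm x hx]
  · let d := fiberRepr (x ∘ σ)
    have hd : ¬ Injective d := fun hd => hxσ fun i j hij => hd (fiberRepr_eq_of_eq hij)
    have hσd : fiberRepr x ∘ σ ∘ d = fiberRepr x ∘ σ :=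
      funext fun i => fiberRepr_eq_of_eq (congrFun (comp_fiberRepr (x ∘ σ)) i)
    calc extendLabelling s N (x ∘ σ)
        = (N (x ∘ σ)).comp (s d) := rfl
      _ = ((extendLabelling s N x).comp (s σ)).comp (s d) :=
        hL.comp_eq_of_not_injective h (hN.mem _)
          (hL.comp_mem σ _ _ (hN.extendLabelling_mem hL x)) hd
      _ = (N x).comp (s (fiberRepr x ∘ σ ∘ d)) := by rw [h.comp_s, h.comp_s]; rfl
      _ = (extendLabelling s N x).comp (s σ) := by rw [hσd, h.comp_s]; rfl

lemma exists_extendLabelling_update (hN : IsInjectiveLabelling s L π N) (h : IsPolyadic c s)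
    (hL : IsLabelSystem c s L) {x : Fin n → U} {i : Fin n} {a : A}
    (ha : extendLabelling s N x (c {i} a)) : ∃ z, extendLabelling s N (update x i z) a := by
  by_cases hx : Set.InjOn x {i}ᶜ
  · obtain ⟨q, F, hF, hFa⟩ := hL.witness i _ _ (hN.extendLabelling_mem hL x) a ha
    obtain ⟨z, hz, -, rfl⟩ := hN.extend x i q F hF
    exact ⟨z, by rwa [extendLabelling_of_injective h (injective_update_of_injOn hx hz)]⟩
  · obtain ⟨j, hj, k, hk, hxjk, hjk⟩ :
        ∃ j, j ≠ i ∧ ∃ k, k ≠ i ∧ x j = x k ∧ j ≠ k := by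
      simpa [Set.InjOn] using hx
    have hreplace {y : Fin n → U} (hy : y j = y k) :
        extendLabelling s N y = (extendLabelling s N y).comp (s (update id j k)) := by
      rw [← hN.extendLabelling_comp h hL, comp_update, ← hy, comp_id, update_eq_self]
    rw [hreplace hxjk] at ha
    change extendLabelling s N x (s (update id j k) (c {i} a)) at ha
    rw [← h.c_s_update_id (Γ := {i}) hj hk] at ha
    obtain ⟨q, F, hF, hFa⟩ := hL.witness i _ _ (hN.extendLabelling_mem hL x) _ ha
    obtain ⟨z, rfl⟩ := hN.surjective q
    have hmem := hN.extendLabelling_mem hL (update x i z)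
    rw [comp_update] at hmem
    have hnot : ¬ Injective (update id j k) := fun hinj =>
      hjk (hinj (by rw [update_self, update_of_ne hjk.symm, id]))
    refine ⟨z, ?_⟩
    rw [hreplace (by rw [update_of_ne hj, update_of_ne hk, hxjk]),
      hL.comp_eq_of_not_injective h hmem hF hnot]
    exact hFa

theorem isLabelling (hN : IsInjectiveLabelling s L π N) (h : IsPolyadic c s)
    (hL : IsLabelSystem c s L) : IsLabelling c s L π (extendLabelling s N) where
  surjective := hN.surjective
  mem := hN.extendLabelling_mem hL
  comp := hN.extendLabelling_comp h hL
  witness _ _ _ := hN.exists_extendLabelling_update h hL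

end IsInjectiveLabelling

namespace IsLabelling

variable {U : Type} {π : U → P} {N : (Fin n → U) → BoundedLatticeHom A Prop}

lemma isCylHom (hN : IsLabelling c s L π N) (h : IsPolyadic c s)
    (hL : IsLabelSystem c s L) : IsCylHom c (homOfPointTypes N) := by
  refine h.isCylHom_of_singleton fun i a => ?_
  ext x
  rw [mem_cylG_singleton]
  refine ⟨hN.witness x i a, fun ⟨z, hz⟩ => ?_⟩
  have hoff : ∀ j, j ≠ i → (π ∘ update x i z) j = (π ∘ x) j := fun j hj =>
    congrArg π (update_of_ne hj _ _)
  exact (hL.cyl i _ _ hoff _ (hN.mem _) _ (hN.mem x) a).1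
    (OrderHomClass.mono (N (update x i z)) (h.le {i} a) hz)

lemma homOfPointTypes_s (hN : IsLabelling c s L π N) (σ : Fin n → Fin n) (a : A) :
    homOfPointTypes N (s σ a) = subG σ (homOfPointTypes N a) :=
  Set.ext fun x => (DFunLike.congr_fun (hN.comp x σ) a).symm.to_iff

end IsLabelling

end Labelling

section Representation

variable {n : ℕ} {A : Type} [BooleanAlgebra A] {c : Set (Fin n) → A → A}

theorem IsPolyadic.exists_hom {s : (Fin n → Fin n) → BoundedLatticeHom A A} {V : Type}
    {R : BoundedLatticeHom A (Set (Fin n → V))} (h : IsPolyadic c s) (hR : IsCylHom c R) {x : A}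
    (hx : (R x).Nonempty) :
    ∃ (U : Type) (f : BoundedLatticeHom A (Set (Fin n → U))),
      IsCylHom c f ∧ (∀ σ a, f (s σ a) = subG σ (f a)) ∧ (f x).Nonempty := by
  cases isEmpty_or_nonempty (Fin n)
  · refine ⟨V, R, hR, fun σ a => ?_, hx⟩
    rw [Subsingleton.elim σ id, h.s_id]
    rfl
  obtain ⟨W, R', hR', hx', htwin⟩ := exists_isCylHom_forall_exists_twin h hR hx
  have hL := isLabelSystem_twinLabels h hR' htwin
  obtain ⟨U, π, N₀, hN₀⟩ := exists_isInjectiveLabelling h hL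
  have hN := hN₀.isLabelling h hL
  have hf := hN.isCylHom h hL
  refine ⟨U, _, hf, hN.homOfPointTypes_s, ?_⟩
  let i : Fin n := Classical.arbitrary _
  obtain ⟨q, -⟩ := exists_twinFamily_rep_eq h hR' htwin i (hx'.some i)
  obtain ⟨y, -⟩ := hN.surjective q
  have hy : (fun _ => y) ∈ homOfPointTypes (extendLabelling s N₀) (c Set.univ x) :=
    apply_c_univ_of_mem_twinLabels h.toIsQuantifier hR' hx' (hN.mem _)
  rw [hf] at hy
  obtain ⟨z, hz, -⟩ := hy
  exact ⟨z, hz⟩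

lemma RepDf.exists_isCylHom_family (hc : RepDf c) :
    ∃ (I : Type) (V : I → Type) (R : ∀ k, BoundedLatticeHom A (Set (Fin n → V k))),
      (∀ k, IsCylHom c (R k)) ∧ ∀ x y, (∀ k, R k x = R k y) → x = y := by
  obtain ⟨I, V, f, hinj, hsup, hcompl, hcyl⟩ := hc
  exact ⟨I, V, fun k => boundedLatticeHomOfSupCompl (f · k) (fun x y => congrFun (hsup x y) k)
      (fun x => congrFun (hcompl x) k),
    fun k Γ a => hcyl Γ a k, fun x y hxy => hinj (funext hxy)⟩

lemma RepDf.exists_isCylHom (hc : RepDf c) {x : A} (hx : x ≠ ⊥) :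
    ∃ (V : Type) (R : BoundedLatticeHom A (Set (Fin n → V))), IsCylHom c R ∧ (R x).Nonempty := by
  obtain ⟨I, V, R, hR, hinj⟩ := hc.exists_isCylHom_family
  obtain ⟨k, hk⟩ : ∃ k, R k x ≠ R k ⊥ := by
    by_contra! hall
    exact hx (hinj x ⊥ hall)
  rw [map_bot] at hk
  exact ⟨V k, R k, hR k, Set.nonempty_iff_ne_empty.2 hk⟩

lemma RepDf.isQuantifier (hc : RepDf c) : IsQuantifier c := by
  obtain ⟨I, V, R, hR, hinj⟩ := hc.exists_isCylHom_family
  refine ⟨fun x => hinj _ _ fun k => ?_, fun Γ x => sup_eq_right.1 (hinj _ _ fun k => ?_),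
    fun Γ => hinj _ _ fun k => ?_, fun Γ Δ x => hinj _ _ fun k => ?_⟩
  · rw [hR, cylG_empty]
  · rw [map_sup, hR]
    exact sup_eq_right.2 (subset_cylG Γ _)
  · rw [hR, map_bot]
    exact cylG_empty_right Γ
  · rw [hR, hR, hR, cylG_union]

lemma repPoly_of_forall_exists_hom {s : (Fin n → Fin n) → A → A}
    (hf : ∀ x, x ≠ ⊥ → ∃ (U : Type) (f : BoundedLatticeHom A (Set (Fin n → U))),
      IsCylHom c f ∧ (∀ σ a, f (s σ a) = subG σ (f a)) ∧ (f x).Nonempty) : RepPoly c s := by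
  choose U f hcyl hsub hne using fun x : {x : A // x ≠ ⊥} => hf x x.2
  refine ⟨_, U, fun a k => f k a, fun x y hxy => ?_, fun x y => funext fun k => map_sup (f k) x y,
    fun x => funext fun k => map_compl' (f k) x, fun Γ x k => hcyl k Γ x,
    fun σ x k => hsub k σ x⟩
  by_contra hxy_ne
  let k : {x : A // x ≠ ⊥} := ⟨symmDiff x y, symmDiff_eq_bot.not.2 hxy_ne⟩
  have hk : f k (symmDiff x y) = ∅ := by
    rw [map_symmDiff', show f k x = f k y from congrFun hxy k, symmDiff_self]
    rfl
  exact (hne k).ne_empty hk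

theorem IsPolyadic.repPoly {s : (Fin n → Fin n) → BoundedLatticeHom A A} (h : IsPolyadic c s)
    (hc : RepDf c) : RepPoly c fun σ => s σ :=
  repPoly_of_forall_exists_hom fun _ hx =>
    let ⟨_, _, hR, hRx⟩ := hc.exists_isCylHom hx
    h.exists_hom hR hRx

namespace RepPoly

variable {s : (Fin n → Fin n) → A → A}

lemma repDf (hr : RepPoly c s) : RepDf c :=
  let ⟨I, U, f, hinj, hsup, hcompl, hcyl, _⟩ := hr
  ⟨I, U, f, hinj, hsup, hcompl, hcyl⟩

lemma s_sup (hr : RepPoly c s) (σ : Fin n → Fin n) (x y : A) : s σ (x ⊔ y) = s σ x ⊔ s σ y := by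
  obtain ⟨I, U, f, hinj, hsup, -, -, hsub⟩ := hr
  refine hinj (funext fun k => ?_)
  rw [hsub, hsup, hsup, Pi.sup_apply, Pi.sup_apply, hsub, hsub]
  rfl

lemma s_compl (hr : RepPoly c s) (σ : Fin n → Fin n) (x : A) : s σ xᶜ = (s σ x)ᶜ := by
  obtain ⟨I, U, f, hinj, -, hcompl, -, hsub⟩ := hr
  refine hinj (funext fun k => ?_)
  rw [hsub, hcompl, hcompl, Pi.compl_apply, Pi.compl_apply, hsub]
  rfl

lemma s_comp (hr : RepPoly c s) (σ τ : Fin n → Fin n) (x : A) : s (σ ∘ τ) x = s σ (s τ x) := by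
  obtain ⟨I, U, f, hinj, -, -, -, hsub⟩ := hr
  refine hinj (funext fun k => ?_)
  rw [hsub, hsub, hsub]
  rfl

lemma s_id (hr : RepPoly c s) (x : A) : s id x = x := by
  obtain ⟨I, U, f, hinj, -, -, -, hsub⟩ := hr
  refine hinj (funext fun k => ?_)
  rw [hsub]
  rfl

lemma s_c_congr (hr : RepPoly c s) (σ τ : Fin n → Fin n) (Γ : Set (Fin n)) (x : A)
    (hστ : ∀ i ∉ Γ, σ i = τ i) : s σ (c Γ x) = s τ (c Γ x) := by
  obtain ⟨I, U, f, hinj, -, -, hcyl, hsub⟩ := hr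
  refine hinj (funext fun k => ?_)
  rw [hsub, hsub, hcyl, subG_cylG_congr hστ]

lemma c_s (hr : RepPoly c s) (σ : Fin n → Fin n) (Γ : Set (Fin n)) (x : A)
    (hσ : Set.InjOn σ (σ ⁻¹' Γ)) : c Γ (s σ x) = s σ (c (σ ⁻¹' Γ) x) := by
  obtain ⟨I, U, f, hinj, -, -, hcyl, hsub⟩ := hr
  refine hinj (funext fun k => ?_)
  rw [hsub, hcyl, hcyl, hsub, cylG_subG hσ]

end RepPoly

end Representation

theorem stmt0_general {n : ℕ} {A : Type} [BooleanAlgebra A]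
    (c : Set (Fin n) → A → A) (s : (Fin n → Fin n) → A → A) :
    RepPoly c s ↔
      (RepDf c ∧
       (∀ (σ : Fin n → Fin n) (x y : A), s σ (x ⊔ y) = s σ x ⊔ s σ y) ∧
       (∀ (σ : Fin n → Fin n) (x : A), s σ xᶜ = (s σ x)ᶜ) ∧
       (∀ (σ τ : Fin n → Fin n) (x : A), s (σ ∘ τ) x = s σ (s τ x)) ∧
       (∀ x : A, s id x = x) ∧
       (∀ (σ τ : Fin n → Fin n) (Γ : Set (Fin n)) (x : A),
          (∀ i ∉ Γ, σ i = τ i) → s σ (c Γ x) = s τ (c Γ x)) ∧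
       (∀ (σ : Fin n → Fin n) (Γ : Set (Fin n)) (x : A),
          Set.InjOn σ (σ ⁻¹' Γ) → c Γ (s σ x) = s σ (c (σ ⁻¹' Γ) x))) := by
  refine ⟨fun hr => ⟨hr.repDf, hr.s_sup, hr.s_compl, hr.s_comp, hr.s_id, hr.s_c_congr, hr.c_s⟩, ?_⟩
  rintro ⟨hc, hsup, hcompl, hcomp, hid, hcongr, hcs⟩
  have h : IsPolyadic c fun σ => boundedLatticeHomOfSupCompl (s σ) (hsup σ) (hcompl σ) :=
    { hc.isQuantifier with s_comp := hcomp, s_id := hid, s_c_congr := hcongr, c_s := hcs }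
  exact h.repPoly hc

/-- Theorem (main1-thm): for finite `n ≥ 3`, a polyadic-type algebra is representable
iff its diagonal-free cylindric reduct is representable and the finitely many
polyadic substitution axioms (1)–(4) hold. -/
theorem stmt0 {n : ℕ} (hn : 3 ≤ n) {A : Type} [BooleanAlgebra A]
    (c : Set (Fin n) → A → A) (s : (Fin n → Fin n) → A → A) :
    RepPoly c s ↔
      (RepDf c ∧
       (∀ (σ : Fin n → Fin n) (x y : A), s σ (x ⊔ y) = s σ x ⊔ s σ y) ∧
       (∀ (σ : Fin n → Fin n) (x : A), s σ xᶜ = (s σ x)ᶜ) ∧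
       (∀ (σ τ : Fin n → Fin n) (x : A), s (σ ∘ τ) x = s σ (s τ x)) ∧
       (∀ x : A, s id x = x) ∧
       (∀ (σ τ : Fin n → Fin n) (Γ : Set (Fin n)) (x : A),
          (∀ i ∉ Γ, σ i = τ i) → s σ (c Γ x) = s τ (c Γ x)) ∧
       (∀ (σ : Fin n → Fin n) (Γ : Set (Fin n)) (x : A),
          Set.InjOn σ (σ ⁻¹' Γ) → c Γ (s σ x) = s σ (c (σ ⁻¹' Γ) x))) :=
  stmt0_general c s
end

section
/- Let n ≥ 3 be a finite natural number and let 𝔄 = ⟨A, +, −, c_i, s_ij, p_ij⟩_{i,j<n} be a csp-algebra satisfying the FPA_n axioms. Then 𝔄 is isomorphic to a subalgebra of a direct product of full csp-set algebras if and only if its permutation-free reduct ⟨A, +, −, c_i, s_ij⟩_{i,j<n} is isomorphic to a subalgebra of a direct product of full cs-set algebras. -/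
/-- Cylindrification: `C_i(R) = {s : s(i/u) ∈ R for some u}`. -/
def cyl {n : ℕ} {U : Type} (i : Fin n) (R : Set (Fin n → U)) : Set (Fin n → U) :=
  {s | ∃ u : U, Function.update s i u ∈ R}

/-- Substitution: `S_ij(R) = {s : s(i/s(j)) ∈ R}`. -/
def subst {n : ℕ} {U : Type} (i j : Fin n) (R : Set (Fin n → U)) : Set (Fin n → U) :=
  {s | Function.update s i (s j) ∈ R}

/-- Transposition: `P_ij(R) = {s : s(i/s(j))(j/s(i)) ∈ R}`. -/
def transp {n : ℕ} {U : Type} (i j : Fin n) (R : Set (Fin n → U)) : Set (Fin n → U) :=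
  {s | Function.update (Function.update s i (s j)) j (s i) ∈ R}

/-- `⟨A, +, −, c_i, s_ij, p_ij⟩` is isomorphic to a subalgebra of a direct product of
full csp-set algebras. -/
def RepCsp {n : ℕ} {A : Type} [BooleanAlgebra A]
    (c : Fin n → A → A) (s : Fin n → Fin n → A → A) (p : Fin n → Fin n → A → A) : Prop :=
  ∃ (ι : Type) (U : ι → Type) (f : A → ∀ k, Set (Fin n → U k)),
    Function.Injective f ∧
    (∀ x y : A, f (x ⊔ y) = f x ⊔ f y) ∧
    (∀ x : A, f xᶜ = (f x)ᶜ) ∧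
    (∀ (i : Fin n) (x : A) (k : ι), f (c i x) k = cyl i (f x k)) ∧
    (∀ (i j : Fin n) (x : A) (k : ι), f (s i j x) k = subst i j (f x k)) ∧
    (∀ (i j : Fin n) (x : A) (k : ι), f (p i j x) k = transp i j (f x k))

/-- `⟨A, +, −, c_i, s_ij⟩` is isomorphic to a subalgebra of a direct product of
full cs-set algebras. -/
def RepCs {n : ℕ} {A : Type} [BooleanAlgebra A]
    (c : Fin n → A → A) (s : Fin n → Fin n → A → A) : Prop :=
  ∃ (ι : Type) (U : ι → Type) (f : A → ∀ k, Set (Fin n → U k)),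
    Function.Injective f ∧
    (∀ x y : A, f (x ⊔ y) = f x ⊔ f y) ∧
    (∀ x : A, f xᶜ = (f x)ᶜ) ∧
    (∀ (i : Fin n) (x : A) (k : ι), f (c i x) k = cyl i (f x k)) ∧
    (∀ (i j : Fin n) (x : A) (k : ι), f (s i j x) k = subst i j (f x k))

/-!
Let `f : A → 𝒫(ⁿU)` be a component of a representation of the permutation-free reduct. On an element
that does not depend on some coordinate, `p i j` is a composition of substitutions, so `f` respects
it there. Membership of a point with a repeated entry is determined by such elements, so at these
points `f` respects `p i j` altogether.

Points with distinct entries are handled by the action of the symmetric group on `A` that F0, F7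
and F8 provide. Over `U` there is a cover `π : V → U` with permutations `h t` for `t : Fin n → V`
such that `h (t ∘ τ) = τ⁻¹ * h t` if `t` is injective, and such that any one coordinate of `t` can
be given a new value over any prescribed point of `U` that makes `h t` trivial if `t` is then
injective. The map `g x = {t | π ∘ t ∘ h t ∈ f ((h t)⁻¹ • x)}` turns `p i j` into a transposition
by equivariance of `h`, still respects `c i` and `s i j`, and identifies no more elements than `f`.
-/

/-- A family satisfying the relations between transpositions `(i j)` of a symmetric group that are
FPA axioms F0, F7 and F8. -/
structure IsTranspositionFamily {α G : Type*} [Group G] (q : α → α → G) : Prop where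
  self : ∀ i, q i i = 1
  symm : ∀ i j, q i j = q j i
  mul_self : ∀ i j, q i j * q i j = 1
  conj : ∀ i j k, i ≠ j → i ≠ k → j ≠ k → q i j * q i k = q j k * q i j

namespace IsTranspositionFamily

variable {α G H : Type*} [Group G] [Group H] {q : α → α → G}

lemma swap [DecidableEq α] :
    IsTranspositionFamily (Equiv.swap : α → α → Equiv.Perm α) where
  self := Equiv.swap_self
  symm := Equiv.swap_comm
  mul_self := Equiv.swap_mul_self
  conj i j k _ hik hjk := by
    rw [Equiv.mul_swap_eq_swap_mul, Equiv.swap_apply_left,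
      Equiv.swap_apply_of_ne_of_ne hik.symm hjk.symm]

lemma prodMk {r : α → α → H} (hq : IsTranspositionFamily q) (hr : IsTranspositionFamily r) :
    IsTranspositionFamily fun i j ↦ (q i j, r i j) where
  self i := Prod.ext (hq.self i) (hr.self i)
  symm i j := Prod.ext (hq.symm i j) (hr.symm i j)
  mul_self i j := Prod.ext (hq.mul_self i j) (hr.mul_self i j)
  conj i j k hij hik hjk := Prod.ext (hq.conj i j k hij hik hjk) (hr.conj i j k hij hik hjk)

/-- The subgroup generated by the transpositions of elements of `S`. When `S` is finite, it will be
the image of the symmetric group of `S`; `exists_monoidHom_swap` rests on an induction on `S`. -/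
def closureOn (q : α → α → G) (S : Set α) : Subgroup G :=
  Subgroup.closure (Set.image2 q S S)

lemma apply_mem_closureOn {S : Set α} {i j : α} (hi : i ∈ S) (hj : j ∈ S) : q i j ∈ closureOn q S :=
  Subgroup.subset_closure (Set.mem_image2_of_mem hi hj)

lemma fst_apply_eq_self_of_mem_closureOn [DecidableEq α] {S : Set α} {a : α} (ha : a ∉ S)
    {g : Equiv.Perm α × G} (hg : g ∈ closureOn (fun i j ↦ (Equiv.swap i j, q i j)) S) :
    g.1 a = a := by
  suffices closureOn (fun i j ↦ (Equiv.swap i j, q i j)) S ≤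
      (MulAction.stabilizer (Equiv.Perm α) a).comap (MonoidHom.fst _ G) from this hg
  refine (Subgroup.closure_le _).2 ?_
  rintro _ ⟨i, hi, j, hj, rfl⟩
  exact Equiv.swap_apply_of_ne_of_ne (ne_of_mem_of_not_mem hi ha).symm
    (ne_of_mem_of_not_mem hj ha).symm

variable (hq : IsTranspositionFamily q)
include hq

lemma inv (i j : α) : (q i j)⁻¹ = q i j := inv_eq_of_mul_eq_one_right (hq.mul_self i j)

lemma mul_mul_self {i j k : α} (hij : i ≠ j) (hik : i ≠ k) (hjk : j ≠ k) :
    q i j * q i k * q i j = q j k := by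
  rw [hq.conj i j k hij hik hjk, mul_assoc, hq.mul_self, mul_one]

lemma commute {a b c d : α} (hab : a ≠ b) (hac : a ≠ c) (had : a ≠ d) (hbc : b ≠ c)
    (hbd : b ≠ d) (hcd : c ≠ d) : Commute (q a b) (q c d) := by
  have h₁ : q a b * q b c = q a c * q a b := by
    simpa only [hq.symm b a] using hq.conj b a c hab.symm hbc hac
  have h₂ : q a b * q b d = q a d * q a b := by
    simpa only [hq.symm b a] using hq.conj b a d hab.symm hbd had
  calc q a b * q c d = (q a b * q b c) * q b d * q b c := by
        rw [← hq.mul_mul_self hbc hbd hcd]; simp only [mul_assoc]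
    _ = q a c * (q a b * q b d) * q b c := by rw [h₁]; simp only [mul_assoc]
    _ = q a c * q a d * (q a b * q b c) := by rw [h₂]; simp only [mul_assoc]
    _ = q a c * q a d * q a c * q a b := by rw [h₁]; simp only [mul_assoc]
    _ = q c d * q a b := by rw [hq.mul_mul_self hac had hcd]

lemma mul_eq_mul_swap [DecidableEq α] {a b c d : α} (hac : a ≠ c) (had : a ≠ d) :
    q a b * q c d = q c d * q a (Equiv.swap c d b) := by
  rcases eq_or_ne c d with rfl | hcd
  · simp [hq.self]
  rcases eq_or_ne b a with rfl | hba
  · simp [hq.self, Equiv.swap_apply_of_ne_of_ne hac had]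
  rcases eq_or_ne b c with rfl | hbc
  · rw [Equiv.swap_apply_left, hq.symm a b, hq.symm b d, hq.symm a d,
      hq.conj d b a hcd.symm had.symm hba]
  rcases eq_or_ne b d with rfl | hbd
  · rw [Equiv.swap_apply_right, hq.symm a b, hq.symm a c, hq.conj c b a hcd hac.symm hba]
  rw [Equiv.swap_apply_of_ne_of_ne hbc hbd, (hq.commute hba.symm hac had hbc hbd hcd).eq]

section Factorization

variable {S : Set α} {a b c d : α} (ha : a ∉ S)
include ha

lemma exists_mul_eq_mul_of_mem (hb : b ∈ insert a S) (hd : d ∈ S) :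
    ∃ h ∈ closureOn q S, ∃ b' ∈ insert a S, q a b * q a d = h * q a b' := by
  have had : a ≠ d := (ne_of_mem_of_not_mem hd ha).symm
  rcases hb with rfl | hbS
  · exact ⟨1, one_mem _, d, Set.mem_insert_of_mem _ hd, by rw [hq.self]⟩
  rcases eq_or_ne b d with rfl | hbd
  · exact ⟨1, one_mem _, a, Set.mem_insert a S, by rw [hq.mul_self, hq.self, one_mul]⟩
  · exact ⟨q b d, apply_mem_closureOn hbS hd, b, Set.mem_insert_of_mem _ hbS,
      hq.conj a b d (ne_of_mem_of_not_mem hbS ha).symm had hbd⟩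

lemma exists_mul_eq_mul_of_mem_insert (hb : b ∈ insert a S) (hc : c ∈ insert a S)
    (hd : d ∈ insert a S) :
    ∃ h ∈ closureOn q S, ∃ b' ∈ insert a S, q a b * q c d = h * q a b' := by
  classical
  rcases hc with rfl | hcS <;> rcases hd with rfl | hdS
  · exact ⟨1, one_mem _, b, hb, by rw [hq.self, one_mul, mul_one]⟩
  · exact hq.exists_mul_eq_mul_of_mem ha hb hdS
  · exact hq.symm d c ▸ hq.exists_mul_eq_mul_of_mem ha hb hcS
  · refine ⟨q c d, apply_mem_closureOn hcS hdS, Equiv.swap c d b, ?_, hq.mul_eq_mul_swap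
      (ne_of_mem_of_not_mem hcS ha).symm (ne_of_mem_of_not_mem hdS ha).symm⟩
    rw [Equiv.swap_apply_def]
    split_ifs
    exacts [Set.mem_insert_of_mem _ hdS, Set.mem_insert_of_mem _ hcS, hb]

lemma exists_eq_mul_of_mem_closureOn_insert {g : G} (hg : g ∈ closureOn q (insert a S)) :
    ∃ h ∈ closureOn q S, ∃ b ∈ insert a S, g = h * q a b := by
  have mul_gen : ∀ g : G, (∃ h ∈ closureOn q S, ∃ b ∈ insert a S, g = h * q a b) →
      ∀ c ∈ insert a S, ∀ d ∈ insert a S,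
      ∃ h ∈ closureOn q S, ∃ b ∈ insert a S, g * q c d = h * q a b := by
    rintro _ ⟨h, hh, b, hb, rfl⟩ c hc d hd
    obtain ⟨h', hh', b', hb', heq⟩ := hq.exists_mul_eq_mul_of_mem_insert ha hb hc hd
    exact ⟨h * h', mul_mem hh hh', b', hb', by rw [mul_assoc, heq, mul_assoc]⟩
  induction hg using Subgroup.closure_induction_right with
  | one => exact ⟨1, one_mem _, a, Set.mem_insert a S, by rw [hq.self, one_mul]⟩
  | mul_right g _ y hy ih =>
    obtain ⟨c, hc, d, hd, rfl⟩ := hy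
    exact mul_gen g ih c hc d hd
  | mul_inv_cancel g _ y hy ih =>
    obtain ⟨c, hc, d, hd, rfl⟩ := hy
    rw [hq.inv]
    exact mul_gen g ih c hc d hd

end Factorization

variable [DecidableEq α]

lemma eq_one_of_one_apply_mem_closureOn {S : Set α} (hS : S.Finite) {g : G}
    (hg : ((1 : Equiv.Perm α), g) ∈ closureOn (fun i j ↦ (Equiv.swap i j, q i j)) S) :
    g = 1 := by
  induction S, hS using Set.Finite.induction_on with
  | empty => simpa [closureOn] using hg
  | @insert a S ha _ ih =>
    obtain ⟨h, hh, b, -, hb⟩ :=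
      (swap.prodMk hq).exists_eq_mul_of_mem_closureOn_insert ha hg
    have h_fix : h.1 a = a := fst_apply_eq_self_of_mem_closureOn ha hh
    have h_b : h.1 b = a := by
      simpa using (congrArg (fun x : Equiv.Perm α × G ↦ x.1 a) hb).symm
    obtain rfl : b = a := h.1.injective (h_b.trans h_fix.symm)
    rw [(swap.prodMk hq).self, mul_one] at hb
    exact ih (hb ▸ hh)

-- The pairs `((i j), q i j)` generate a subgroup of `Perm α × G`, shown to be the graph of `φ`.
theorem exists_monoidHom_swap [Finite α] :
    ∃ φ : Equiv.Perm α →* G, ∀ i j, φ (Equiv.swap i j) = q i j := by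
  let K := closureOn (fun i j ↦ ((Equiv.swap i j : Equiv.Perm α), q i j)) Set.univ
  have h_mem (i j : α) : (Equiv.swap i j, q i j) ∈ K :=
    apply_mem_closureOn (Set.mem_univ i) (Set.mem_univ j)
  have h_inj : Function.Injective ((MonoidHom.fst (Equiv.Perm α) G).comp K.subtype) := by
    rw [injective_iff_map_eq_one]
    rintro ⟨⟨σ, g⟩, hg⟩ hσ
    obtain rfl : σ = 1 := hσ
    obtain rfl := hq.eq_one_of_one_apply_mem_closureOn Set.finite_univ hg
    rfl
  have h_surj (σ : Equiv.Perm α) : ∃ x : K, x.1.1 = σ := by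
    induction σ using Equiv.Perm.swap_induction_on with
    | one => exact ⟨1, rfl⟩
    | swap_mul σ i j _ ih =>
      obtain ⟨x, rfl⟩ := ih
      exact ⟨⟨_, h_mem i j⟩ * x, rfl⟩
  obtain ⟨φ, hφ⟩ := Subgroup.exists_eq_graph ⟨h_inj, h_surj⟩
  exact ⟨φ, fun i j ↦ MonoidHom.mem_graph.1 (hφ ▸ h_mem i j)⟩

end IsTranspositionFamily

section EquivariantEnumeration

variable {ι V : Type*}

lemma comp_perm_comp_inv (t : ι → V) (σ : Equiv.Perm ι) :
    (t ∘ σ) ∘ (σ⁻¹ : Equiv.Perm ι) = t :=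
  (Equiv.comp_symm_eq σ t (t ∘ σ)).2 rfl

lemma exists_perm_comp_eq_of_range_eq {s t : ι → V} (hs : Function.Injective s)
    (ht : Function.Injective t) (h : Set.range s = Set.range t) :
    ∃ σ : Equiv.Perm ι, s ∘ σ = t :=
  ⟨(Equiv.ofInjective t ht).trans ((Equiv.setCongr h.symm).trans (Equiv.ofInjective s hs).symm),
    funext fun i ↦ by simp [Equiv.apply_ofInjective_symm hs]⟩

-- The permutations of `ι` act freely on injective sequences, with orbits the fibres of the range;
-- `h s` carries `s` to the representative of its orbit in a transversal containing `Y`.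
lemma exists_equivariant_eq_one_on {Y : Set (ι → V)} (hY : ∀ s ∈ Y, Function.Injective s)
    (hrange : Y.InjOn Set.range) :
    ∃ h : (ι → V) → Equiv.Perm ι, (∀ s, Function.Injective s → ∀ τ : Equiv.Perm ι,
      h (s ∘ τ) = τ⁻¹ * h s) ∧ ∀ s ∈ Y, h s = 1 := by
  obtain ⟨T, hYT, hT, h_image, hT_inj⟩ := hrange.exists_subset_injOn_subset_range_eq
    (s := {s : ι → V | Function.Injective s}) hY
  have h_exists (s : ι → V) (hs : Function.Injective s) : ∃ σ : Equiv.Perm ι, s ∘ σ ∈ T := by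
    obtain ⟨t, htT, hts⟩ := h_image.symm ▸ Set.mem_image_of_mem Set.range hs
    obtain ⟨σ, rfl⟩ := exists_perm_comp_eq_of_range_eq hs (hT htT) hts.symm
    exact ⟨σ, htT⟩
  have h_unique {s : ι → V} (hs : Function.Injective s) {σ τ : Equiv.Perm ι} (hσ : s ∘ σ ∈ T)
      (hτ : s ∘ τ ∈ T) : σ = τ :=
    DFunLike.coe_injective (hs.comp_left (hT_inj hσ hτ (by simp)))
  choose! h hh using h_exists
  refine ⟨h, fun s hs τ ↦ ?_, fun s hs ↦ h_unique (hY s hs) (hh s (hY s hs)) (hYT hs)⟩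
  rw [eq_inv_mul_iff_mul_eq]
  exact h_unique hs (hh (s ∘ τ) (hs.comp τ.injective)) (hh s hs)

end EquivariantEnumeration

/-- A cover of `U` by formal terms, in which each sequence `s`, coordinate `i` and point `u` have a
point `lift s i u` over `u` of their own, from which `s` and `i` can be read off. -/
inductive LiftCover (ι U : Type*)
  | of : U → LiftCover ι U
  | lift : (ι → LiftCover ι U) → ι → U → LiftCover ι U

namespace LiftCover

variable {ι U : Type*}

/-- The covering map `LiftCover ι U → U`. -/
def base : LiftCover ι U → U
  | of u => u
  | lift _ _ u => u

/-- The depth of a point as a term, used to compare the points of one sequence. If `ι` is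
infinite, the supremum may be unbounded and is then `0`. -/
noncomputable def rank : LiftCover ι U → ℕ
  | of _ => 0
  | lift s _ _ => (⨆ j, (s j).rank) + 1

lemma base_surjective : Function.Surjective (base : LiftCover ι U → U) := fun u ↦ ⟨of u, rfl⟩

variable [Finite ι]

lemma rank_lt_rank_lift (s : ι → LiftCover ι U) (i j : ι) (u : U) :
    (s j).rank < (lift s i u).rank :=
  Nat.lt_succ_of_le (le_ciSup (Set.finite_range fun j ↦ (s j).rank).bddAbove j)

variable [DecidableEq ι]

lemma eq_or_rank_lt_of_mem_range_update {s : ι → LiftCover ι U} {i : ι} {u : U} {v : LiftCover ι U}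
    (hv : v ∈ Set.range (Function.update s i (lift s i u))) :
    v = lift s i u ∨ v.rank < (lift s i u).rank := by
  obtain ⟨j, rfl⟩ := hv
  rcases eq_or_ne j i with rfl | hj
  · exact .inl (Function.update_self ..)
  · exact .inr (by simpa only [Function.update_of_ne hj] using rank_lt_rank_lift s i j u)

lemma eq_lift_of_range_update_eq {s s' : ι → LiftCover ι U} {i i' : ι} {u u' : U}
    (h : Set.range (Function.update s i (lift s i u)) =
      Set.range (Function.update s' i' (lift s' i' u'))) : lift s i u = lift s' i' u' := by
  have self_mem (s : ι → LiftCover ι U) (i u) :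
      lift s i u ∈ Set.range (Function.update s i (lift s i u)) := ⟨i, Function.update_self ..⟩
  have h_mem := eq_or_rank_lt_of_mem_range_update (h ▸ self_mem s i u)
  have h_mem' := eq_or_rank_lt_of_mem_range_update (h.symm ▸ self_mem s' i' u')
  exact h_mem.resolve_right fun hlt ↦ h_mem'.elim (fun e ↦ hlt.ne (e ▸ rfl)) hlt.asymm

theorem exists_equivariant :
    ∃ h : (ι → LiftCover ι U) → Equiv.Perm ι,
      (∀ t, Function.Injective t → ∀ τ : Equiv.Perm ι, h (t ∘ τ) = τ⁻¹ * h t) ∧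
      ∀ t i u, ∃ v, base v = u ∧
        (Function.Injective (Function.update t i v) → h (Function.update t i v) = 1) := by
  let Y : Set (ι → LiftCover ι U) :=
    {t | Function.Injective t ∧ ∃ s i u, t = Function.update s i (lift s i u)}
  have hY : Y.InjOn Set.range := by
    rintro _ ⟨-, s, i, u, rfl⟩ _ ⟨-, s', i', u', rfl⟩ h
    obtain ⟨rfl, rfl, rfl⟩ := LiftCover.lift.inj (eq_lift_of_range_update_eq h)
    rfl
  obtain ⟨h, h_equiv, h_one⟩ := exists_equivariant_eq_one_on (fun t ht ↦ ht.1) hY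
  exact ⟨h, h_equiv, fun t i u ↦ ⟨lift t i u, rfl, fun ht ↦ h_one _ ⟨ht, t, i, u, rfl⟩⟩⟩

end LiftCover

section BooleanMaps

variable {A B : Type*} [BooleanAlgebra A] [BooleanAlgebra B] {g : A → B}
  (hsup : ∀ x y, g (x ⊔ y) = g x ⊔ g y) (hcompl : ∀ x, g xᶜ = (g x)ᶜ)
include hsup hcompl

lemma map_inf_of_map_sup_of_map_compl (x y : A) : g (x ⊓ y) = g x ⊓ g y := by
  rw [← compl_compl (x ⊓ y), compl_inf, hcompl, hsup, hcompl, hcompl, compl_sup, compl_compl,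
    compl_compl]

lemma map_bot_of_map_sup_of_map_compl : g ⊥ = ⊥ := by
  rw [← inf_compl_self ⊥, map_inf_of_map_sup_of_map_compl hsup hcompl, hcompl, inf_compl_self]

end BooleanMaps

section Structures

variable {n : ℕ} {A B : Type*} [BooleanAlgebra A] [BooleanAlgebra B]

/-- The axioms F0–F9 of finitary polyadic algebras of dimension `n`. -/
structure IsFPA (c : Fin n → A → A) (s p : Fin n → Fin n → A → A) : Prop where
  s_self : ∀ i x, s i i x = x
  p_self : ∀ i x, p i i x = x
  p_symm : ∀ i j x, p i j x = p j i x
  le_c : ∀ i x, x ≤ c i x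
  c_sup : ∀ i x y, c i (x ⊔ y) = c i x ⊔ c i y
  s_c_self : ∀ i j x, s i j (c i x) = c i x
  c_s_self : ∀ i j x, i ≠ j → c i (s i j x) = s i j x
  s_c : ∀ i j k x, k ≠ i → k ≠ j → s i j (c k x) = c k (s i j x)
  s_sup : ∀ i j x y, s i j (x ⊔ y) = s i j x ⊔ s i j y
  s_compl : ∀ i j x, s i j xᶜ = (s i j x)ᶜ
  p_sup : ∀ i j x y, p i j (x ⊔ y) = p i j x ⊔ p i j y
  p_compl : ∀ i j x, p i j xᶜ = (p i j x)ᶜ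
  p_p : ∀ i j x, p i j (p i j x) = x
  p_conj : ∀ i j k x, i ≠ j → i ≠ k → j ≠ k → p i j (p i k x) = p j k (p i j x)
  p_s : ∀ i j x, p i j (s j i x) = s i j x

/-- Homomorphisms of cs-algebras. A map into a direct product is one iff its components are, so
representations are treated one component at a time. -/
structure IsCsHom (c : Fin n → A → A) (s : Fin n → Fin n → A → A)
    (c' : Fin n → B → B) (s' : Fin n → Fin n → B → B) (f : A → B) : Prop where
  map_sup : ∀ x y, f (x ⊔ y) = f x ⊔ f y
  map_compl : ∀ x, f xᶜ = (f x)ᶜ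
  map_c : ∀ i x, f (c i x) = c' i (f x)
  map_s : ∀ i j x, f (s i j x) = s' i j (f x)

/-- Homomorphisms of csp-algebras. -/
structure IsCspHom (c : Fin n → A → A) (s p : Fin n → Fin n → A → A)
    (c' : Fin n → B → B) (s' p' : Fin n → Fin n → B → B) (f : A → B) : Prop
    extends IsCsHom c s c' s' f where
  map_p : ∀ i j x, f (p i j x) = p' i j (f x)

end Structures

section SetAlgebra

variable {n : ℕ} {U : Type}

lemma mem_transp {i j : Fin n} {R : Set (Fin n → U)} {t : Fin n → U} :
    t ∈ transp i j R ↔ t ∘ Equiv.swap i j ∈ R := by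
  rw [Equiv.swap_comm, Equiv.comp_swap_eq_update]
  rfl

lemma mem_subst_iff_of_apply_eq {k l : Fin n} {R : Set (Fin n → U)} {t : Fin n → U}
    (h : t k = t l) : t ∈ subst k l R ↔ t ∈ R := by
  rw [subst, Set.mem_ofPred_eq, ← h, Function.update_eq_self]

theorem isFPA_setAlgebra :
    IsFPA (cyl : Fin n → Set (Fin n → U) → Set (Fin n → U)) subst transp where
  s_self i R := Set.ext fun t ↦ mem_subst_iff_of_apply_eq rfl
  p_self i R := Set.ext fun t ↦ by rw [mem_transp, Equiv.swap_self]; rfl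
  p_symm i j R := Set.ext fun t ↦ by rw [mem_transp, mem_transp, Equiv.swap_comm]
  le_c i R t ht := ⟨t i, by rwa [Function.update_eq_self]⟩
  c_sup i R R' := Set.ext fun t ↦ exists_or
  s_c_self i j R := Set.ext fun t ↦ by simp [subst, cyl]
  c_s_self i j R hij := Set.ext fun t ↦ by
    simpa [subst, cyl, hij.symm] using fun _ ↦ ⟨t i⟩
  s_c i j k R hki hkj := Set.ext fun t ↦ by
    simp [subst, cyl, Function.update_of_ne hkj.symm, Function.update_comm hki]
  s_sup _ _ _ _ := rfl
  s_compl _ _ _ := rfl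
  p_sup _ _ _ _ := rfl
  p_compl _ _ _ := rfl
  p_p i j R := Set.ext fun t ↦ by
    rw [mem_transp, mem_transp, Function.comp_assoc, ← Equiv.Perm.coe_mul, Equiv.swap_mul_self]
    rfl
  p_conj i j k R hij hik hjk := Set.ext fun t ↦ by
    simp only [mem_transp, Function.comp_assoc, ← Equiv.Perm.coe_mul]
    rw [IsTranspositionFamily.swap.conj i j k hij hik hjk]
  p_s i j R := Set.ext fun t ↦ by
    rcases eq_or_ne i j with rfl | hij
    · simp [transp, subst]
    · have h_update : Function.update (Function.update t i (t j)) j (t j) =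
          Function.update t i (t j) :=
        Function.update_eq_self_iff.2 (by rw [Function.update_of_ne hij.symm])
      simp [transp, subst, hij, h_update]

end SetAlgebra

namespace IsFPA

variable {n : ℕ} {A B : Type*} [BooleanAlgebra A] [BooleanAlgebra B]
  {c : Fin n → A → A} {s p : Fin n → Fin n → A → A}
  {c' : Fin n → B → B} {s' p' : Fin n → Fin n → B → B}

section Algebra

variable (hA : IsFPA c s p)
include hA

lemma p_inf (i j : Fin n) (x y : A) : p i j (x ⊓ y) = p i j x ⊓ p i j y :=
  map_inf_of_map_sup_of_map_compl (hA.p_sup i j) (hA.p_compl i j) x y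

lemma s_inf (i j : Fin n) (x y : A) : s i j (x ⊓ y) = s i j x ⊓ s i j y :=
  map_inf_of_map_sup_of_map_compl (hA.s_sup i j) (hA.s_compl i j) x y

lemma s_bot (i j : Fin n) : s i j ⊥ = ⊥ :=
  map_bot_of_map_sup_of_map_compl (hA.s_sup i j) (hA.s_compl i j)

lemma p_mono (i j : Fin n) : Monotone (p i j) := .of_map_sup (hA.p_sup i j)

lemma s_s_self {i j : Fin n} (hij : i ≠ j) (x : A) : s i j (s i j x) = s i j x := by
  rw [← hA.c_s_self i j x hij, hA.s_c_self]

lemma c_c_self (hn : 2 ≤ n) (i : Fin n) (x : A) : c i (c i x) = c i x := by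
  have : Nontrivial (Fin n) := Fin.nontrivial_iff_two_le.2 hn
  obtain ⟨j, hj⟩ := exists_ne i
  rw [← hA.s_c_self i j x, hA.c_s_self i j _ hj.symm]

lemma c_bot (hn : 2 ≤ n) (i : Fin n) : c i ⊥ = ⊥ := by
  have : Nontrivial (Fin n) := Fin.nontrivial_iff_two_le.2 hn
  obtain ⟨j, hj⟩ := exists_ne i
  rw [← hA.s_bot i j, hA.c_s_self i j _ hj.symm]

lemma p_eq_s_of_c_eq {j : Fin n} {z : A} (hz : c j z = z) (i : Fin n) : p i j z = s i j z := by
  rw [← hz, ← hA.p_s i j, hA.s_c_self]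

lemma p_eq_s_s_s_of_c_eq {i j k : Fin n} (hij : i ≠ j) (hik : i ≠ k) (hjk : j ≠ k) {z : A}
    (hz : c k z = z) : p i j z = s k i (s i j (s j k z)) := by
  have h_conj : p i j z = p k i (p i j (p j k z)) := by
    rw [hA.p_symm i j (p j k z), hA.p_conj j i k z hij.symm hjk hik, hA.p_symm k i, hA.p_p,
      hA.p_symm]
  rw [h_conj, hA.p_eq_s_of_c_eq hz, hA.p_eq_s_of_c_eq (hA.c_s_self j k z hjk),
    hA.p_eq_s_of_c_eq (hA.c_s_self i j _ hij)]

lemma c_p_of_c_eq {k : Fin n} {z : A} (hz : c k z = z) (i j : Fin n) :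
    c (Equiv.swap i j k) (p i j z) = p i j z := by
  rcases eq_or_ne i j with rfl | hij
  · simpa [hA.p_self] using hz
  rcases eq_or_ne k i with rfl | hki
  · rw [Equiv.swap_apply_left, hA.p_symm, hA.p_eq_s_of_c_eq hz, hA.c_s_self _ _ _ hij.symm]
  rcases eq_or_ne k j with rfl | hkj
  · rw [Equiv.swap_apply_right, hA.p_eq_s_of_c_eq hz, hA.c_s_self _ _ _ hij]
  rw [Equiv.swap_apply_of_ne_of_ne hki hkj, hA.p_eq_s_s_s_of_c_eq hij hki.symm hkj.symm hz,
    hA.c_s_self _ _ _ hki]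

/-- The automorphism `p i j` of the Boolean algebra, as an order isomorphism. -/
def pIso (i j : Fin n) : A ≃o A :=
  (Function.Involutive.toPerm (p i j) (hA.p_p i j)).toOrderIso (hA.p_mono i j) (hA.p_mono i j)

lemma isTranspositionFamily_pIso : IsTranspositionFamily hA.pIso where
  self i := RelIso.ext (hA.p_self i)
  symm i j := RelIso.ext (hA.p_symm i j)
  mul_self i j := RelIso.ext (hA.p_p i j)
  conj i j k hij hik hjk := RelIso.ext fun x ↦ hA.p_conj i j k x hij hik hjk

/-- The action of the symmetric group on an FPA in which `(i j)` acts as `p i j`. -/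
noncomputable def permIso : Equiv.Perm (Fin n) →* (A ≃o A) :=
  hA.isTranspositionFamily_pIso.exists_monoidHom_swap.choose

lemma permIso_swap_apply (i j : Fin n) (x : A) : hA.permIso (Equiv.swap i j) x = p i j x := by
  rw [permIso, hA.isTranspositionFamily_pIso.exists_monoidHom_swap.choose_spec]
  rfl

lemma permIso_swap_mul_apply (i j : Fin n) (σ : Equiv.Perm (Fin n)) (x : A) :
    hA.permIso (Equiv.swap i j * σ) x = p i j (hA.permIso σ x) := by
  rw [map_mul, RelIso.mul_apply, permIso_swap_apply]

lemma c_permIso_of_c_eq {k : Fin n} {z : A} (hz : c k z = z) (σ : Equiv.Perm (Fin n)) :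
    c (σ k) (hA.permIso σ z) = hA.permIso σ z := by
  induction σ using Equiv.Perm.swap_induction_on with
  | one => simpa using hz
  | swap_mul σ i j _ ih =>
    rw [permIso_swap_mul_apply, Equiv.Perm.mul_apply]
    exact hA.c_p_of_c_eq ih i j

end Algebra

lemma map_p_of_c_eq (hA : IsFPA c s p) (hB : IsFPA c' s' p') {f : A → B}
    (hf : IsCsHom c s c' s' f) {k : Fin n} {z : A} (hz : c k z = z) (i j : Fin n) :
    f (p i j z) = p' i j (f z) := by
  have hfz : c' k (f z) = f z := by rw [← hf.map_c, hz]
  rcases eq_or_ne i j with rfl | hij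
  · rw [hA.p_self, hB.p_self]
  rcases eq_or_ne k i with rfl | hki
  · rw [hA.p_symm, hB.p_symm, hA.p_eq_s_of_c_eq hz, hB.p_eq_s_of_c_eq hfz, hf.map_s]
  rcases eq_or_ne k j with rfl | hkj
  · rw [hA.p_eq_s_of_c_eq hz, hB.p_eq_s_of_c_eq hfz, hf.map_s]
  simp only [hA.p_eq_s_s_s_of_c_eq hij hki.symm hkj.symm hz,
    hB.p_eq_s_s_s_of_c_eq hij hki.symm hkj.symm hfz, hf.map_s]

section SetRepresentation

variable {U : Type} {f : A → Set (Fin n → U)} (hA : IsFPA c s p)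
  (hf : IsCsHom c s cyl subst f)
include hA hf

-- If `t ∘ swap i j` has equal entries at `k ≠ l`, it cannot tell `f x` from `f (s k l x)`. Were the
-- claim false, `t` would lie in `f (p i j z)` for `z := x ⊓ (s k l x)ᶜ`, although `s k l z = ⊥`.
-- Enlarging `z` to `c m z`, on which `f` is known to respect `p i j`, keeps `s k l (c m z) = ⊥`.
lemma mem_of_mem_map_p (hn : 3 ≤ n) {t : Fin n → U} (ht : ¬ Function.Injective t) {i j : Fin n}
    {x : A} (h : t ∈ f (p i j x)) : t ∘ Equiv.swap i j ∈ f x := by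
  obtain ⟨k, l, hkl, hne⟩ : ∃ k l, (t ∘ Equiv.swap i j) k = (t ∘ Equiv.swap i j) l ∧ k ≠ l :=
    Function.not_injective_iff.1 (mt (Equiv.injective_comp _ t).1 ht)
  obtain ⟨m, hmk, hml⟩ : ∃ m, m ≠ k ∧ m ≠ l := Fin.exists_ne_and_ne_of_two_lt k l hn
  have map_mono : Monotone f := .of_map_sup hf.map_sup
  have mem_s_iff (y : A) :
      t ∘ Equiv.swap i j ∈ f (s k l y) ↔ t ∘ Equiv.swap i j ∈ f y := by
    rw [hf.map_s, mem_subst_iff_of_apply_eq hkl]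
  have mem_p_iff {q : Fin n} {z : A} (hz : c q z = z) :
      t ∈ f (p i j z) ↔ t ∘ Equiv.swap i j ∈ f z := by
    rw [hA.map_p_of_c_eq isFPA_setAlgebra hf hz, mem_transp]
  by_contra hx
  let z := x ⊓ s k l xᶜ
  have hz : s k l z = ⊥ := by
    rw [hA.s_inf, hA.s_s_self hne, hA.s_compl, inf_compl_self]
  have h_compl : t ∈ f (p i j (s k l xᶜ)) := by
    rw [mem_p_iff (hA.c_s_self k l _ hne), mem_s_iff, hf.map_compl]
    exact hx
  have h_inf : t ∈ f (p i j z) := by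
    rw [hA.p_inf, map_inf_of_map_sup_of_map_compl hf.map_sup hf.map_compl]
    exact ⟨h, h_compl⟩
  have h_c : t ∘ Equiv.swap i j ∈ f (c m z) :=
    (mem_p_iff (hA.c_c_self (by omega) m z)).1 (map_mono (hA.p_mono i j (hA.le_c m z)) h_inf)
  rw [← mem_s_iff, hA.s_c k l m z hmk hml, hz, hA.c_bot (by omega),
    map_bot_of_map_sup_of_map_compl hf.map_sup hf.map_compl] at h_c
  exact h_c

lemma mem_map_p_iff_of_not_injective (hn : 3 ≤ n) {t : Fin n → U}
    (ht : ¬ Function.Injective t) (i j : Fin n) (x : A) :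
    t ∈ f (p i j x) ↔ t ∘ Equiv.swap i j ∈ f x := by
  refine ⟨hA.mem_of_mem_map_p hf hn ht, fun h ↦ by_contra fun h' ↦ ?_⟩
  have h_compl : t ∘ Equiv.swap i j ∈ f xᶜ := hA.mem_of_mem_map_p hf hn ht <| by
    rw [hA.p_compl, hf.map_compl]
    exact h'
  rw [hf.map_compl] at h_compl
  exact h_compl h

lemma mem_map_permIso_iff_of_not_injective (hn : 3 ≤ n) {t : Fin n → U}
    (ht : ¬ Function.Injective t) (σ : Equiv.Perm (Fin n)) (x : A) :
    t ∈ f (hA.permIso σ x) ↔ t ∘ σ ∈ f x := by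
  induction σ using Equiv.Perm.swap_induction_on generalizing t with
  | one => simp
  | swap_mul σ i j _ ih =>
    rw [permIso_swap_mul_apply, hA.mem_map_p_iff_of_not_injective hf hn ht,
      ih (mt (Equiv.injective_comp _ t).1 ht)]
    rfl

lemma mem_map_permIso_iff_of_c_eq {k : Fin n} {z : A} (hz : c k z = z) (σ : Equiv.Perm (Fin n))
    (t : Fin n → U) : t ∈ f (hA.permIso σ z) ↔ t ∘ σ ∈ f z := by
  induction σ using Equiv.Perm.swap_induction_on generalizing t with
  | one => simp
  | swap_mul σ i j _ ih =>
    rw [permIso_swap_mul_apply, hA.map_p_of_c_eq isFPA_setAlgebra hf (hA.c_permIso_of_c_eq hz σ),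
      mem_transp, ih]
    rfl

end SetRepresentation

section Twist

variable {U V : Type} (hA : IsFPA c s p) {f : A → Set (Fin n → U)}
  {π : V → U} {h : (Fin n → V) → Equiv.Perm (Fin n)}

/-- The map `f` pulled back along `π : V → U`, where the coordinates of `t : Fin n → V` are first
enumerated by `h t`, and this is undone on the side of `A`. If `h` is equivariant, then this
turns the operations `p i j` into transpositions. -/
def twist (π : V → U) (h : (Fin n → V) → Equiv.Perm (Fin n)) (f : A → Set (Fin n → U)) (x : A) :
    Set (Fin n → V) :=
  {t | π ∘ t ∘ h t ∈ f (hA.permIso (h t)⁻¹ x)}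

lemma twist_sup (hf : IsCsHom c s cyl subst f) (x y : A) :
    hA.twist π h f (x ⊔ y) = hA.twist π h f x ⊔ hA.twist π h f y := by
  ext t
  simp only [twist, Set.mem_ofPred_eq, map_sup, hf.map_sup]
  rfl

lemma twist_compl (hf : IsCsHom c s cyl subst f) (x : A) :
    hA.twist π h f xᶜ = (hA.twist π h f x)ᶜ := by
  ext t
  simp only [twist, Set.mem_ofPred_eq, map_compl', hf.map_compl]
  rfl

lemma mem_twist_of_c_eq (hf : IsCsHom c s cyl subst f) {k : Fin n} {z : A} (hz : c k z = z)
    {t : Fin n → V} : t ∈ hA.twist π h f z ↔ π ∘ t ∈ f z := by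
  rw [twist, Set.mem_ofPred_eq, hA.mem_map_permIso_iff_of_c_eq hf hz, ← Function.comp_assoc,
    comp_perm_comp_inv]

lemma mem_twist_of_not_injective (hf : IsCsHom c s cyl subst f) (hn : 3 ≤ n) {t : Fin n → V}
    (ht : ¬ Function.Injective t) {x : A} : t ∈ hA.twist π h f x ↔ π ∘ t ∈ f x := by
  have ht' : ¬ Function.Injective (π ∘ t ∘ h t) := fun hinj ↦
    ht ((Equiv.injective_comp _ _).1 hinj.of_comp)
  rw [twist, Set.mem_ofPred_eq, hA.mem_map_permIso_iff_of_not_injective hf hn ht',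
    ← Function.comp_assoc, comp_perm_comp_inv]

lemma mem_twist_of_eq_one (hf : IsCsHom c s cyl subst f) (hn : 3 ≤ n) {t : Fin n → V}
    (ht : Function.Injective t → h t = 1) {x : A} : t ∈ hA.twist π h f x ↔ π ∘ t ∈ f x := by
  by_cases ht_inj : Function.Injective t
  · simp [twist, ht ht_inj]
  · exact hA.mem_twist_of_not_injective hf hn ht_inj

lemma twist_s (hf : IsCsHom c s cyl subst f) (hn : 3 ≤ n) (i j : Fin n) (x : A) :
    hA.twist π h f (s i j x) = subst i j (hA.twist π h f x) := by
  rcases eq_or_ne i j with rfl | hij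
  · rw [hA.s_self, isFPA_setAlgebra.s_self]
  ext t
  have h_update : ¬ Function.Injective (Function.update t i (t j)) := fun hinj ↦
    hij (hinj (by simp [hij.symm]))
  rw [hA.mem_twist_of_c_eq hf (hA.c_s_self i j x hij), hf.map_s, subst, subst, Set.mem_ofPred_eq,
    Set.mem_ofPred_eq, hA.mem_twist_of_not_injective hf hn h_update, Function.comp_update]
  rfl

lemma twist_c (hf : IsCsHom c s cyl subst f) (hn : 3 ≤ n)
    (h_lift : ∀ t i u, ∃ v, π v = u ∧
      (Function.Injective (Function.update t i v) → h (Function.update t i v) = 1))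
    (i : Fin n) (x : A) : hA.twist π h f (c i x) = cyl i (hA.twist π h f x) := by
  have h_cc := hA.c_c_self (by omega) i x
  ext t
  rw [hA.mem_twist_of_c_eq hf h_cc, hf.map_c]
  constructor
  · rintro ⟨u, hu⟩
    obtain ⟨v, rfl, hv⟩ := h_lift t i u
    exact ⟨v, (hA.mem_twist_of_eq_one hf hn hv).2 (by rwa [Function.comp_update])⟩
  · rintro ⟨v, hv⟩
    have h_mono : Monotone (hA.twist π h f) := .of_map_sup (hA.twist_sup hf)
    have h_mem := (hA.mem_twist_of_c_eq hf h_cc).1 (h_mono (hA.le_c i x) hv)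
    rw [hf.map_c, Function.comp_update] at h_mem
    simpa [cyl] using h_mem

lemma twist_p (hf : IsCsHom c s cyl subst f) (hn : 3 ≤ n)
    (h_equiv : ∀ t, Function.Injective t → ∀ τ : Equiv.Perm (Fin n), h (t ∘ τ) = τ⁻¹ * h t)
    (i j : Fin n) (x : A) : hA.twist π h f (p i j x) = transp i j (hA.twist π h f x) := by
  ext t
  rw [mem_transp]
  by_cases ht : Function.Injective t
  · have h_comp : (t ∘ Equiv.swap i j) ∘ (Equiv.swap i j * h t : Equiv.Perm (Fin n)) =
        t ∘ h t := funext fun a ↦ by simp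
    simp only [twist, Set.mem_ofPred_eq, h_equiv t ht, Equiv.swap_inv, h_comp, mul_inv_rev, map_mul,
      RelIso.mul_apply, permIso_swap_apply]
  · rw [hA.mem_twist_of_not_injective hf hn ht,
      hA.mem_twist_of_not_injective hf hn (mt (Equiv.injective_comp _ t).1 ht),
      hA.mem_map_p_iff_of_not_injective hf hn fun hinj ↦ ht hinj.of_comp, Function.comp_assoc]

end Twist

theorem exists_isCspHom (hA : IsFPA c s p) (hn : 3 ≤ n) {U : Type} {f : A → Set (Fin n → U)}
    (hf : IsCsHom c s cyl subst f) :
    ∃ (V : Type) (g : A → Set (Fin n → V)), IsCspHom c s p cyl subst transp g ∧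
      ∀ x y, g x = g y → f x = f y := by
  obtain ⟨h, h_equiv, h_lift⟩ := LiftCover.exists_equivariant (ι := Fin n) (U := U)
  refine ⟨LiftCover (Fin n) U, hA.twist LiftCover.base h f,
    ⟨⟨hA.twist_sup hf, hA.twist_compl hf, hA.twist_c hf hn h_lift, hA.twist_s hf hn⟩,
      hA.twist_p hf hn h_equiv⟩, fun x y hxy ↦ Set.ext fun t ↦ ?_⟩
  obtain ⟨t, rfl⟩ : ∃ t' : Fin n → LiftCover (Fin n) U, LiftCover.base ∘ t' = t :=
    LiftCover.base_surjective.comp_left t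
  let i₀ : Fin n := ⟨0, by omega⟩
  obtain ⟨v, hv, h_one⟩ := h_lift t i₀ (LiftCover.base (t i₀))
  have h_base : LiftCover.base ∘ Function.update t i₀ v = LiftCover.base ∘ t := by
    rw [Function.comp_update, hv]
    exact Function.update_eq_self ..
  rw [← h_base, ← hA.mem_twist_of_eq_one hf hn h_one, hxy, hA.mem_twist_of_eq_one hf hn h_one]

end IsFPA

/-- Theorem: an `FPA_n` is representable iff its permutation-free reduct is
representable. -/
theorem stmt5 {n : ℕ} (hn : 3 ≤ n) {A : Type} [BooleanAlgebra A]
    (c : Fin n → A → A) (s : Fin n → Fin n → A → A) (p : Fin n → Fin n → A → A)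
    (hsii : ∀ (i : Fin n) (x : A), s i i x = x)
    (hpii : ∀ (i : Fin n) (x : A), p i i x = x)
    (hpsymm : ∀ (i j : Fin n) (x : A), p i j x = p j i x)
    (hF1 : ∀ (i : Fin n) (x : A), x ≤ c i x)
    (hF2 : ∀ (i : Fin n) (x y : A), c i (x ⊔ y) = c i x ⊔ c i y)
    (hF3 : ∀ (i j : Fin n) (x : A), s i j (c i x) = c i x)
    (hF4 : ∀ (i j : Fin n) (x : A), i ≠ j → c i (s i j x) = s i j x)
    (hF5 : ∀ (i j k : Fin n) (x : A), k ≠ i → k ≠ j → s i j (c k x) = c k (s i j x))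
    (hF6ssup : ∀ (i j : Fin n) (x y : A), s i j (x ⊔ y) = s i j x ⊔ s i j y)
    (hF6scompl : ∀ (i j : Fin n) (x : A), s i j xᶜ = (s i j x)ᶜ)
    (hF6psup : ∀ (i j : Fin n) (x y : A), p i j (x ⊔ y) = p i j x ⊔ p i j y)
    (hF6pcompl : ∀ (i j : Fin n) (x : A), p i j xᶜ = (p i j x)ᶜ)
    (hF7 : ∀ (i j : Fin n) (x : A), p i j (p i j x) = x)
    (hF8 : ∀ (i j k : Fin n) (x : A), i ≠ j → i ≠ k → j ≠ k →
      p i j (p i k x) = p j k (p i j x))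
    (hF9 : ∀ (i j : Fin n) (x : A), p i j (s j i x) = s i j x) :
    RepCsp c s p ↔ RepCs c s := by
  constructor
  · rintro ⟨ι, U, f, hinj, hsup, hcompl, hc, hs, -⟩
    exact ⟨ι, U, f, hinj, hsup, hcompl, hc, hs⟩
  · rintro ⟨ι, U, f, hinj, hsup, hcompl, hc, hs⟩
    have hA : IsFPA c s p :=
      ⟨hsii, hpii, hpsymm, hF1, hF2, hF3, hF4, hF5, hF6ssup, hF6scompl, hF6psup, hF6pcompl,
        hF7, hF8, hF9⟩
    have hf (k : ι) : IsCsHom c s cyl subst (f · k) :=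
      ⟨fun x y ↦ congrFun (hsup x y) k, fun x ↦ congrFun (hcompl x) k, fun i x ↦ hc i x k,
        fun i j x ↦ hs i j x k⟩
    choose V g hg hgf using fun k ↦ hA.exists_isCspHom hn (hf k)
    refine ⟨ι, V, fun x k ↦ g k x, fun x y hxy ↦ ?_, fun x y ↦ ?_, fun x ↦ ?_, ?_, ?_, ?_⟩
    · exact hinj (funext fun k ↦ hgf k x y (congrFun hxy k))
    · exact funext fun k ↦ (hg k).map_sup x y
    · exact funext fun k ↦ (hg k).map_compl x
    · exact fun i x k ↦ (hg k).map_c i x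
    · exact fun i j x k ↦ (hg k).map_s i j x
    · exact fun i j x k ↦ (hg k).map_p i j x
end

section
/- Let n ≥ 3 be a finite natural number and let 𝔄 be a csp-algebra of dimension n satisfying the FPA_n axioms. Then for all i, j < n and all x ∈ A: p_ij c_i x = c_j p_ij x; and for all pairwise distinct i, j, m < n and all x ∈ A: p_ij c_m x = c_m p_ij x. -/
/-!
Since `p_ij c_i x = s_ji c_i x`, the element `p_ij c_i x` is closed under `c_j`, so monotonicity
gives `c_j p_ij x ≤ p_ij c_i x`. Exchanging `i` and `j` and conjugating by the involution `p_ij`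
yields the reverse inequality. For the second identity, the transposition `(i j)` is the composite
of `(m i)`, `(i j)` and `(j m)`, which carries `m` along the cycle `m → i → j → m`, and the first
identity applies to each factor.
-/

section

open Function

theorem map_le_map_of_isFixedPt {A : Type*} [Preorder A] {c d p : A → A}
    (hd : Monotone d) (hp : Monotone p) (hc : ∀ x, x ≤ c x)
    (hfix : ∀ x, IsFixedPt d (p (c x))) (x : A) : d (p x) ≤ p (c x) :=
  (hd (hp (hc x))).trans_eq (hfix x)

theorem semiconj_of_involutive_of_isFixedPt {A : Type*} [PartialOrder A] {c d p : A → A}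
    (hc : Monotone c) (hd : Monotone d) (hp : Monotone p)
    (hc_le : ∀ x, x ≤ c x) (hd_le : ∀ x, x ≤ d x) (hinv : Involutive p)
    (hfix_d : ∀ x, IsFixedPt d (p (c x))) (hfix_c : ∀ x, IsFixedPt c (p (d x))) :
    Semiconj p c d := by
  intro x
  refine le_antisymm ?_ (map_le_map_of_isFixedPt hd hp hc_le hfix_d x)
  calc p (c x) = p (c (p (p x))) := by rw [hinv x]
    _ ≤ p (p (d (p x))) := hp (map_le_map_of_isFixedPt hc hp hd_le hfix_c (p x))
    _ = d (p x) := hinv _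

variable {ι A : Type*} {c : ι → A → A} {s p : ι → ι → A → A}

theorem transposition_cylindrification_eq_substitution
    (hpsymm : ∀ (i j : ι) (x : A), p i j x = p j i x)
    (hF3 : ∀ (i j : ι) (x : A), s i j (c i x) = c i x)
    (hF9 : ∀ (i j : ι) (x : A), p i j (s j i x) = s i j x)
    (i j : ι) (x : A) : p i j (c i x) = s j i (c i x) := by
  rw [← hF9 j i, hF3, hpsymm]

theorem isFixedPt_transposition_cylindrification
    (hpsymm : ∀ (i j : ι) (x : A), p i j x = p j i x)
    (hF3 : ∀ (i j : ι) (x : A), s i j (c i x) = c i x)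
    (hF4 : ∀ (i j : ι) (x : A), i ≠ j → c i (s i j x) = s i j x)
    (hF9 : ∀ (i j : ι) (x : A), p i j (s j i x) = s i j x)
    {i j : ι} (hij : i ≠ j) (x : A) : IsFixedPt (c j) (p i j (c i x)) := by
  rw [transposition_cylindrification_eq_substitution hpsymm hF3 hF9]
  exact hF4 j i _ hij.symm

theorem semiconj_transposition_cylindrification [PartialOrder A]
    (hc : ∀ i, Monotone (c i)) (hp : ∀ i j, Monotone (p i j))
    (hpii : ∀ (i : ι) (x : A), p i i x = x)
    (hpsymm : ∀ (i j : ι) (x : A), p i j x = p j i x)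
    (hF1 : ∀ (i : ι) (x : A), x ≤ c i x)
    (hF3 : ∀ (i j : ι) (x : A), s i j (c i x) = c i x)
    (hF4 : ∀ (i j : ι) (x : A), i ≠ j → c i (s i j x) = s i j x)
    (hF7 : ∀ (i j : ι) (x : A), p i j (p i j x) = x)
    (hF9 : ∀ (i j : ι) (x : A), p i j (s j i x) = s i j x)
    (i j : ι) : Semiconj (p i j) (c i) (c j) := by
  obtain rfl | hij := eq_or_ne i j
  · intro x
    simp only [hpii]
  have hfix {k l : ι} (hkl : k ≠ l) (x : A) : IsFixedPt (c l) (p k l (c k x)) :=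
    isFixedPt_transposition_cylindrification hpsymm hF3 hF4 hF9 hkl x
  refine semiconj_of_involutive_of_isFixedPt (hc i) (hc j) (hp i j) (hF1 i) (hF1 j) (hF7 i j)
    (hfix hij) fun x => ?_
  rw [hpsymm i j]
  exact hfix hij.symm x

theorem transposition_eq_comp
    (hpsymm : ∀ (i j : ι) (x : A), p i j x = p j i x)
    (hF7 : ∀ (i j : ι) (x : A), p i j (p i j x) = x)
    (hF8 : ∀ (i j k : ι) (x : A), i ≠ j → i ≠ k → j ≠ k → p i j (p i k x) = p j k (p i j x))
    {i j m : ι} (hij : i ≠ j) (him : i ≠ m) (hjm : j ≠ m) :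
    p i j = p j m ∘ p i j ∘ p m i := by
  funext x
  rw [comp_apply, comp_apply, hpsymm m i, hF8 i j m x hij him hjm, hF7]

theorem semiconj_transposition_cylindrification_of_ne
    (hpsymm : ∀ (i j : ι) (x : A), p i j x = p j i x)
    (hF7 : ∀ (i j : ι) (x : A), p i j (p i j x) = x)
    (hF8 : ∀ (i j k : ι) (x : A), i ≠ j → i ≠ k → j ≠ k → p i j (p i k x) = p j k (p i j x))
    (hpc : ∀ i j, Semiconj (p i j) (c i) (c j))
    {i j m : ι} (hij : i ≠ j) (him : i ≠ m) (hjm : j ≠ m) :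
    Semiconj (p i j) (c m) (c m) := by
  rw [transposition_eq_comp hpsymm hF7 hF8 hij him hjm]
  exact ((hpc m i).trans (hpc i j)).trans (hpc j m)

end

theorem stmt10_general {ι A : Type*} [PartialOrder A]
    (c : ι → A → A) (s : ι → ι → A → A) (p : ι → ι → A → A)
    (hc : ∀ i, Monotone (c i)) (hp : ∀ i j, Monotone (p i j))
    (hpii : ∀ (i : ι) (x : A), p i i x = x)
    (hpsymm : ∀ (i j : ι) (x : A), p i j x = p j i x)
    (hF1 : ∀ (i : ι) (x : A), x ≤ c i x)
    (hF3 : ∀ (i j : ι) (x : A), s i j (c i x) = c i x)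
    (hF4 : ∀ (i j : ι) (x : A), i ≠ j → c i (s i j x) = s i j x)
    (hF7 : ∀ (i j : ι) (x : A), p i j (p i j x) = x)
    (hF8 : ∀ (i j k : ι) (x : A), i ≠ j → i ≠ k → j ≠ k →
      p i j (p i k x) = p j k (p i j x))
    (hF9 : ∀ (i j : ι) (x : A), p i j (s j i x) = s i j x) :
    (∀ (i j : ι) (x : A), p i j (c i x) = c j (p i j x)) ∧
    (∀ (i j m : ι), i ≠ j → i ≠ m → j ≠ m → ∀ x : A,
      p i j (c m x) = c m (p i j x)) := by
  have hpc : ∀ i j, Function.Semiconj (p i j) (c i) (c j) :=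
    semiconj_transposition_cylindrification hc hp hpii hpsymm hF1 hF3 hF4 hF7 hF9
  exact ⟨hpc, fun _ _ _ hij him hjm =>
    semiconj_transposition_cylindrification_of_ne hpsymm hF7 hF8 hpc hij him hjm⟩

/-- Lemma (P4)–(P5): in any `FPA_n` (`n ≥ 3`): `p_ij c_i x = c_j p_ij x` for all
`i, j`, and `p_ij c_m x = c_m p_ij x` for pairwise distinct `i, j, m`. -/
theorem stmt10 {n : ℕ} (hn : 3 ≤ n) {A : Type} [BooleanAlgebra A]
    (c : Fin n → A → A) (s : Fin n → Fin n → A → A) (p : Fin n → Fin n → A → A)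
    (hsii : ∀ (i : Fin n) (x : A), s i i x = x)
    (hpii : ∀ (i : Fin n) (x : A), p i i x = x)
    (hpsymm : ∀ (i j : Fin n) (x : A), p i j x = p j i x)
    (hF1 : ∀ (i : Fin n) (x : A), x ≤ c i x)
    (hF2 : ∀ (i : Fin n) (x y : A), c i (x ⊔ y) = c i x ⊔ c i y)
    (hF3 : ∀ (i j : Fin n) (x : A), s i j (c i x) = c i x)
    (hF4 : ∀ (i j : Fin n) (x : A), i ≠ j → c i (s i j x) = s i j x)
    (hF5 : ∀ (i j k : Fin n) (x : A), k ≠ i → k ≠ j → s i j (c k x) = c k (s i j x))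
    (hF6ssup : ∀ (i j : Fin n) (x y : A), s i j (x ⊔ y) = s i j x ⊔ s i j y)
    (hF6scompl : ∀ (i j : Fin n) (x : A), s i j xᶜ = (s i j x)ᶜ)
    (hF6psup : ∀ (i j : Fin n) (x y : A), p i j (x ⊔ y) = p i j x ⊔ p i j y)
    (hF6pcompl : ∀ (i j : Fin n) (x : A), p i j xᶜ = (p i j x)ᶜ)
    (hF7 : ∀ (i j : Fin n) (x : A), p i j (p i j x) = x)
    (hF8 : ∀ (i j k : Fin n) (x : A), i ≠ j → i ≠ k → j ≠ k →
      p i j (p i k x) = p j k (p i j x))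
    (hF9 : ∀ (i j : Fin n) (x : A), p i j (s j i x) = s i j x) :
    (∀ (i j : Fin n) (x : A), p i j (c i x) = c j (p i j x)) ∧
    (∀ (i j m : Fin n), i ≠ j → i ≠ m → j ≠ m → ∀ x : A,
      p i j (c m x) = c m (p i j x)) :=
  stmt10_general c s p (fun i => .of_map_sup (hF2 i)) (fun i j => .of_map_sup (hF6psup i j))
    hpii hpsymm hF1 hF3 hF4 hF7 hF8 hF9
end
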